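/- arXiv:2402.17021 — 5 statements merged into one kernel-verified Lean document; each statement's English description precedes it below -/
import Mathlib

section
/- Fix real numbers u, v, w, r, t, y with u+v > 0, w > 0, r > 0, −2w < t < 2r and y > 0. For each positive integer N with 4N > y let q = q_N = exp(−2/√N) and θ = arccos(1 − y/(2N)). Then the limit as N → ∞ of N^{u+v} · [ (q;q)_∞ (−q^{v+w+t};q)_∞ (q^{u+v};q)_∞ (−q^{v+r};q)_∞ (−q^{u+w};q)_∞ (q^{w+r};q)_∞ (−q^{u+r−t};q)_∞ · (e^{2iθ};q)_∞ (e^{−2iθ};q)_∞ ] / [ 4πN (q^{u+v+w+r};q)_∞ √(y/N) √(1 − y/(4N)) · ∏_{σ∈{+1,−1}} (q^{v+t/2} e^{σiθ};q)_∞ (−q^{w+t/2} e^{σiθ};q)_∞ (q^{u−t/2} e^{σiθ};q)_∞ (−q^{r−t/2} e^{σiθ};q)_∞ ] exists and equals Γ(u+v+w+r) · |Γ(v+t/2+i√y/2)|² · |Γ(u−t/2+i√y/2)|² / ( 8π Γ(u+v) Γ(w+r) √y · |Γ(i√y)|² ). -/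
open Filter

/-- Infinite q-Pochhammer symbol `(a;q)_∞ = ∏_{k=0}^∞ (1 - a q^k)` for complex `a, q`. -/
noncomputable def qPochInf (a q : ℂ) : ℂ := ∏' k : ℕ, (1 - a * q ^ k)

/-- Weak asymmetry scaling `q_N = exp(-2/√N)`. -/
noncomputable def qN (N : ℕ) : ℝ := Real.exp (-2 / Real.sqrt N)

/-- Real powers of `q_N`: `q_N^x = exp(-2x/√N)`, as a complex number. -/
noncomputable def qpow (N : ℕ) (x : ℝ) : ℂ := Complex.ofReal (Real.exp (-2 * x / Real.sqrt N))

/-- `e^{ix}` for real `x`. -/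
noncomputable def eI (x : ℝ) : ℂ := Complex.exp (Complex.I * x)

/-- `|Γ(a+ib)|² := Γ(a+ib)·Γ(a−ib)` for real `a, b`. -/
noncomputable def GammaSq (a b : ℝ) : ℂ :=
  Complex.Gamma ((a : ℂ) + (b : ℂ) * Complex.I) * Complex.Gamma ((a : ℂ) - (b : ℂ) * Complex.I)

open Topology

/-- The q-Pochhammer symbol `(q^x;q)_∞` with `q = e^{-h}`. -/
noncomputable def Ph (h : ℝ) (x : ℂ) : ℂ := qPochInf (Complex.exp (-(h * x))) (Complex.exp (-(h : ℂ)))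

/-- The q-Pochhammer symbol `(-q^x;q)_∞` with `q = e^{-h}`. -/
noncomputable def Mh (h : ℝ) (x : ℂ) : ℂ :=
  qPochInf (-Complex.exp (-(h * x))) (Complex.exp (-(h : ℂ)))

lemma norm_q_lt {h : ℝ} (hh : 0 < h) : ‖Complex.exp (-(h : ℂ))‖ < 1 := by
  rw [Complex.norm_exp]; simpa using hh

lemma summ_poch (a : ℂ) {q : ℂ} (hq : ‖q‖ < 1) : Summable (fun k : ℕ => ‖-(a * q ^ k)‖) := by
  have : Summable (fun k : ℕ => ‖a‖ * ‖q‖ ^ k) :=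
    (summable_geometric_of_lt_one (norm_nonneg _) hq).mul_left _
  simpa using this

lemma mult_poch (a : ℂ) {q : ℂ} (hq : ‖q‖ < 1) : Multipliable (fun k : ℕ => 1 - a * q ^ k) := by
  simpa [sub_eq_add_neg] using multipliable_one_add_of_summable (summ_poch a hq)

lemma poch_tendsto (a : ℂ) {q : ℂ} (hq : ‖q‖ < 1) :
    Tendsto (fun m : ℕ => ∏ k ∈ Finset.range m, (1 - a * q ^ k)) atTop (𝓝 (qPochInf a q)) :=
  (mult_poch a hq).hasProd.tendsto_prod_nat

lemma poch_succ (a : ℂ) {q : ℂ} (hq : ‖q‖ < 1) :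
    qPochInf a q = (1 - a) * qPochInf (a * q) q := by
  have h1 := (poch_tendsto a hq).comp (tendsto_add_atTop_nat 1)
  have h2 := (poch_tendsto (a * q) hq).const_mul (1 - a)
  refine tendsto_nhds_unique h1 (h2.congr fun m => ?_)
  simp only [Function.comp, Finset.prod_range_succ']
  rw [mul_comm]
  congr 1
  · exact Finset.prod_congr rfl fun k _ => by ring
  · simp

lemma poch_neg_mul (a : ℂ) {q : ℂ} (hq : ‖q‖ < 1) :
    qPochInf (-a) q * qPochInf a q = qPochInf (a ^ 2) (q ^ 2) := by
  have hq2 : ‖q ^ 2‖ < 1 := by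
    rw [norm_pow]; exact pow_lt_one₀ (norm_nonneg _) hq two_ne_zero
  refine tendsto_nhds_unique ((poch_tendsto (-a) hq).mul (poch_tendsto a hq)) ?_
  refine (poch_tendsto (a ^ 2) hq2).congr fun m => ?_
  rw [← Finset.prod_mul_distrib]
  exact Finset.prod_congr rfl fun k _ => by ring

lemma poch_ne_zero {a q : ℂ} (ha : ‖a‖ < 1) (hq : ‖q‖ < 1) : qPochInf a q ≠ 0 := by
  have := tprod_one_add_ne_zero_of_summable (f := fun k : ℕ => -(a * q ^ k)) ?_ (summ_poch a hq)
  · simpa [qPochInf, sub_eq_add_neg] using this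
  · intro k hk
    have h1 : a * q ^ k = 1 := by linear_combination -hk
    have h2 : ‖a * q ^ k‖ < 1 := by
      rw [norm_mul, norm_pow]
      calc ‖a‖ * ‖q‖ ^ k ≤ ‖a‖ * 1 := by
            gcongr; exact pow_le_one₀ (norm_nonneg _) hq.le
        _ < 1 := by simpa using ha
    rw [h1] at h2; simp at h2

lemma Ph_succ {h : ℝ} (hh : 0 < h) (x : ℂ) :
    Ph h x = (1 - Complex.exp (-(h * x))) * Ph h (x + 1) := by
  unfold Ph
  rw [poch_succ _ (norm_q_lt hh), ← Complex.exp_add]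
  congr 3; ring

lemma Mh_succ {h : ℝ} (hh : 0 < h) (x : ℂ) :
    Mh h x = (1 + Complex.exp (-(h * x))) * Mh h (x + 1) := by
  unfold Mh
  rw [poch_succ _ (norm_q_lt hh), neg_mul, ← Complex.exp_add, sub_neg_eq_add]
  congr 4; ring

lemma Mh_mul_Ph {h : ℝ} (hh : 0 < h) (x : ℂ) : Mh h x * Ph h x = Ph (2 * h) x := by
  unfold Mh Ph
  rw [poch_neg_mul _ (norm_q_lt hh), ← Complex.exp_nat_mul, ← Complex.exp_nat_mul]
  congr 2 <;> push_cast <;> ring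

lemma Ph_one_ne {h : ℝ} (hh : 0 < h) : Ph h 1 ≠ 0 := by
  unfold Ph
  rw [mul_one]
  exact poch_ne_zero (norm_q_lt hh) (norm_q_lt hh)

lemma Mh_one_ne {h : ℝ} (hh : 0 < h) : Mh h 1 ≠ 0 := by
  have h1 := Mh_mul_Ph hh 1
  intro h0
  rw [h0, zero_mul] at h1
  exact Ph_one_ne (by positivity) h1.symm

/-- `log (1 - e^{-hs})`. -/
noncomputable def gl (h : ℝ) (s : ℂ) : ℂ := Complex.log (1 - Complex.exp (-(h * s)))

lemma norm_exp_lt {h : ℝ} (hh : 0 < h) {s : ℂ} (hs : 0 < s.re) : ‖Complex.exp (-(h * s))‖ < 1 := by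
  rw [Complex.norm_exp]; simp; positivity

lemma slit {h : ℝ} (hh : 0 < h) {s : ℂ} (hs : 0 < s.re) :
    1 - Complex.exp (-(h * s)) ∈ Complex.slitPlane := by
  rw [sub_eq_add_neg]
  exact Complex.mem_slitPlane_of_norm_lt_one (by simpa using norm_exp_lt hh hs)

lemma exp_gl {h : ℝ} (hh : 0 < h) {s : ℂ} (hs : 0 < s.re) :
    Complex.exp (gl h s) = 1 - Complex.exp (-(h * s)) :=
  Complex.exp_log (Complex.slitPlane_ne_zero (slit hh hs))

lemma exp_deriv (h : ℝ) (s : ℂ) :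
    HasDerivAt (fun s : ℂ => Complex.exp (-(h * s))) (-(h * Complex.exp (-(h * s)))) s := by
  have h0 : HasDerivAt (fun s : ℂ => Complex.exp (-(h * s)))
      (Complex.exp (-(h * s)) * -((h : ℂ) * 1)) s :=
    ((hasDerivAt_id' s).const_mul (h : ℂ)).neg.cexp
  exact h0.congr_deriv (by ring)

lemma gl_deriv {h : ℝ} (hh : 0 < h) {s : ℂ} (hs : 0 < s.re) :
    HasDerivAt (gl h) (h * Complex.exp (-(h * s)) / (1 - Complex.exp (-(h * s)))) s := by
  have h1 : HasDerivAt (fun s : ℂ => 1 - Complex.exp (-(h * s))) (h * Complex.exp (-(h * s))) s :=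
    ((exp_deriv h s).const_sub 1).congr_deriv (by ring)
  exact h1.clog (slit hh hs)

lemma gl_deriv2 {h : ℝ} (hh : 0 < h) {s : ℂ} (hs : 0 < s.re) :
    HasDerivAt (fun s : ℂ => h * Complex.exp (-(h * s)) / (1 - Complex.exp (-(h * s))))
      (-(h ^ 2 * Complex.exp (-(h * s)) / (1 - Complex.exp (-(h * s))) ^ 2)) s := by
  have h0 := exp_deriv h s
  have hne := Complex.slitPlane_ne_zero (slit hh hs)
  refine ((h0.const_mul (h : ℂ)).div (h0.const_sub 1) hne).congr_deriv ?_
  rw [← neg_div]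
  congr 1
  ring

lemma real_bound {c : ℝ} (hc : 0 < c) : c ^ 2 * Real.exp (-c) ≤ (1 - Real.exp (-c)) ^ 2 := by
  have h1 : c / 2 ≤ Real.sinh (c / 2) := Real.self_le_sinh_iff.2 (by positivity)
  rw [Real.sinh_eq] at h1
  have hp := Real.exp_pos (-(c / 2))
  have h2 : Real.exp (c / 2) * Real.exp (-(c / 2)) = 1 := by rw [← Real.exp_add]; simp
  have h3 : Real.exp (-c) = Real.exp (-(c / 2)) ^ 2 := by
    rw [← Real.exp_nat_mul]; congr 1; push_cast; ring
  have h4 : c * Real.exp (-(c / 2)) ≤ 1 - Real.exp (-c) := by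
    rw [h3]; nlinarith
  calc _ = (c * Real.exp (-(c / 2))) ^ 2 := by rw [h3]; ring
    _ ≤ _ := by gcongr

lemma gl_deriv2_bound {h : ℝ} (hh : 0 < h) {s : ℂ} {a : ℝ} (ha : 0 < a) (hs : a ≤ s.re) :
    ‖-((h : ℂ) ^ 2 * Complex.exp (-(h * s)) / (1 - Complex.exp (-(h * s))) ^ 2)‖ ≤ 1 / a ^ 2 := by
  have hs0 : 0 < s.re := ha.trans_le hs
  have hc : 0 < h * s.re := by positivity
  have he : ‖Complex.exp (-(h * s))‖ = Real.exp (-(h * s.re)) := by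
    rw [Complex.norm_exp]; simp
  have h1 : 1 - Real.exp (-(h * s.re)) ≤ ‖1 - Complex.exp (-(h * s))‖ := by
    have := norm_sub_norm_le (1 : ℂ) (Complex.exp (-(h * s)))
    rw [he] at this; simpa using this
  have h2 : 0 < 1 - Real.exp (-(h * s.re)) := by simpa using hc
  rw [norm_neg, norm_div, norm_mul, norm_pow, norm_pow, he, Complex.norm_real, Real.norm_of_nonneg hh.le]
  calc _ ≤ h ^ 2 * Real.exp (-(h * s.re)) / (1 - Real.exp (-(h * s.re))) ^ 2 := by gcongr
    _ ≤ 1 / s.re ^ 2 := by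
      rw [div_le_div_iff₀ (by positivity) (by positivity)]
      have := real_bound hc
      nlinarith
    _ ≤ _ := by gcongr

lemma gl_taylor {h : ℝ} (hh : 0 < h) {a : ℝ} (ha : 0 < a) {z : ℂ} (hz : 0 ≤ z.re) :
    ‖gl h (a + z) - gl h a - z * (h * Complex.exp (-(h * a)) / (1 - Complex.exp (-(h * a))))‖
      ≤ ‖z‖ ^ 2 / a ^ 2 := by
  set d : ℂ → ℂ := fun s : ℂ => h * Complex.exp (-(h * s)) / (1 - Complex.exp (-(h * s))) with hd
  let S : Set ℂ := {s | a ≤ s.re} ∩ Metric.closedBall (a : ℂ) ‖z‖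
  have hS : Convex ℝ S :=
    (convex_halfSpace_re_ge a).inter (convex_closedBall _ _)
  have haS : (a : ℂ) ∈ S := ⟨by simp, by simp⟩
  have hzS : (a : ℂ) + z ∈ S := ⟨by simpa using hz, by simp⟩
  have hpos : ∀ s ∈ S, 0 < s.re := fun s hs => ha.trans_le hs.1
  have h1 : ∀ s ∈ S, ‖d s - d a‖ ≤ ‖z‖ / a ^ 2 := by
    intro s hs
    have := Convex.norm_image_sub_le_of_norm_hasDerivWithin_le (f := d) (C := 1 / a ^ 2)
      (fun x hx => (gl_deriv2 hh (hpos x hx)).hasDerivWithinAt)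
      (fun x hx => gl_deriv2_bound hh ha hx.1) hS haS hs
    refine this.trans ?_
    have h2 : ‖s - a‖ ≤ ‖z‖ := by simpa [dist_eq_norm] using hs.2
    calc _ ≤ 1 / a ^ 2 * ‖z‖ := by gcongr
      _ = _ := by ring
  have := Convex.norm_image_sub_le_of_norm_hasDerivWithin_le
    (f := fun s => gl h s - s * d a) (f' := fun s => d s - d a) (C := ‖z‖ / a ^ 2)
      (fun x hx => by
        have h3 := (gl_deriv hh (hpos x hx)).sub ((hasDerivAt_id x).mul_const (d a))
        simp only [one_mul] at h3
        exact h3.hasDerivWithinAt)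
      h1 hS haS hzS
  calc _ = ‖gl h (a + z) - (a + z) * d a - (gl h a - a * d a)‖ := by
        congr 1; simp only [hd]; ring
    _ ≤ _ := this
    _ = _ := by simp; ring

/-- Terms of the logarithm of the q-Gamma product. -/
noncomputable def Tt (h : ℝ) (x : ℂ) (n : ℕ) : ℂ :=
  gl h ((n + 1 : ℝ) + x) - gl h (n + 1 : ℝ) - x * (gl h ((n + 1 : ℝ) + 1) - gl h (n + 1 : ℝ))

lemma Tt_bound {h : ℝ} (hh : 0 < h) {x : ℂ} (hx : 0 ≤ x.re) (n : ℕ) :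
    ‖Tt h x n‖ ≤ (‖x‖ ^ 2 + ‖x‖) * (1 / ((n : ℝ) + 1) ^ 2) := by
  have ha : (0 : ℝ) < n + 1 := by positivity
  have h1 := gl_taylor hh ha hx
  have h2 := gl_taylor hh ha (z := 1) (by simp)
  set D := (h * Complex.exp (-(h * ((n + 1 : ℝ) : ℂ))) / (1 - Complex.exp (-(h * ((n + 1 : ℝ) : ℂ)))))
  calc ‖Tt h x n‖ = ‖(gl h ((n + 1 : ℝ) + x) - gl h (n + 1 : ℝ) - x * D) -
        x * (gl h ((n + 1 : ℝ) + 1) - gl h (n + 1 : ℝ) - 1 * D)‖ := by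
        congr 1; unfold Tt; ring
    _ ≤ _ := norm_sub_le _ _
    _ ≤ ‖x‖ ^ 2 / ((n : ℝ) + 1) ^ 2 + ‖x‖ * (‖(1 : ℂ)‖ ^ 2 / ((n : ℝ) + 1) ^ 2) := by
        rw [norm_mul]; gcongr
    _ = _ := by simp; ring

lemma summ_sq : Summable (fun n : ℕ => 1 / ((n : ℝ) + 1) ^ 2) := by
  have := (summable_nat_add_iff 1).2 (Real.summable_nat_pow_inv.2 one_lt_two)
  simpa using this

lemma Tt_summable {h : ℝ} (hh : 0 < h) {x : ℂ} (hx : 0 ≤ x.re) : Summable (Tt h x) :=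
  Summable.of_norm_bounded (summ_sq.mul_left _) (Tt_bound hh hx)

lemma Tt_partial {h : ℝ} (hh : 0 < h) {x : ℂ} (hx : 0 ≤ x.re) (m : ℕ) :
    ∏ n ∈ Finset.range m, Complex.exp (Tt h x n) =
      (∏ n ∈ Finset.range m, (1 - Complex.exp (-(h * (x + 1))) * Complex.exp (-(h : ℂ)) ^ n)) /
      (∏ n ∈ Finset.range m, (1 - Complex.exp (-(h * 1)) * Complex.exp (-(h : ℂ)) ^ n)) *
      Complex.exp (x * (gl h 1 - gl h (m + 1 : ℝ))) := by
  induction m with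
  | zero => simp
  | succ m ih =>
    rw [Finset.prod_range_succ, ih, Finset.prod_range_succ, Finset.prod_range_succ]
    have e1 : 1 - Complex.exp (-(h * (x + 1))) * Complex.exp (-(h : ℂ)) ^ m =
        Complex.exp (gl h ((m + 1 : ℝ) + x)) := by
      rw [exp_gl hh (by simp; positivity), ← Complex.exp_nat_mul, ← Complex.exp_add]
      congr 2; push_cast; ring
    have e2 : 1 - Complex.exp (-(h * 1)) * Complex.exp (-(h : ℂ)) ^ m =
        Complex.exp (gl h (m + 1 : ℝ)) := by
      rw [exp_gl hh (by simp; positivity), ← Complex.exp_nat_mul, ← Complex.exp_add]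
      congr 2; push_cast; ring
    rw [e1, e2, mul_div_mul_comm, ← Complex.exp_sub, mul_assoc, mul_assoc, ← Complex.exp_add,
      ← Complex.exp_add]
    congr 2
    unfold Tt
    push_cast
    ring

lemma Ph_exp {h : ℝ} (hh : 0 < h) {x : ℂ} (hx : 0 ≤ x.re) :
    Complex.exp (∑' n, Tt h x n) = Ph h (x + 1) / Ph h 1 * Complex.exp (x * gl h 1) := by
  have h1 := (Tt_summable hh hx).hasSum.cexp.tendsto_prod_nat
  have hq := norm_q_lt hh
  have h2 := (poch_tendsto (Complex.exp (-(h * (x + 1)))) hq).div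
    (poch_tendsto (Complex.exp (-(h * 1))) hq) (Ph_one_ne hh)
  have h3 : Tendsto (fun m : ℕ => Complex.exp (-(h : ℂ)) ^ (m + 1)) atTop (𝓝 0) :=
    (tendsto_pow_atTop_nhds_zero_of_norm_lt_one hq).comp (tendsto_add_atTop_nat 1)
  have h4 : Tendsto (fun m : ℕ => gl h (m + 1 : ℝ)) atTop (𝓝 0) := by
    have h5 : Tendsto (fun m : ℕ => Complex.log (1 - Complex.exp (-(h : ℂ)) ^ (m + 1))) atTop
        (𝓝 (Complex.log (1 - 0))) := (h3.const_sub 1).clog (by simp)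
    simp only [sub_zero, Complex.log_one] at h5
    refine h5.congr fun m => ?_
    unfold gl
    rw [← Complex.exp_nat_mul]; congr 3; push_cast; ring
  have h6 := h2.mul (((h4.const_sub (gl h 1)).const_mul x).cexp)
  rw [sub_zero] at h6
  refine tendsto_nhds_unique h1 (h6.congr fun m => ?_)
  exact (Tt_partial hh hx m).symm

lemma tendsto_one_sub_exp {ι : Type*} {l : Filter ι} {h : ι → ℝ} (hh : ∀ᶠ i in l, 0 < h i)
    (h0 : Tendsto h l (𝓝 0)) {s : ι → ℂ} {s0 : ℂ} (hs : Tendsto s l (𝓝 s0)) :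
    Tendsto (fun i => (1 - Complex.exp (-(h i * s i))) / h i) l (𝓝 s0) := by
  have hc : ContinuousAt (dslope Complex.exp 0) 0 :=
    continuousAt_dslope_same.2 Complex.differentiable_exp.differentiableAt
  have hz : Tendsto (fun i => -((h i : ℂ) * s i)) l (𝓝 0) := by
    have h1 : Tendsto (fun i => (h i : ℂ)) l (𝓝 ((0 : ℝ) : ℂ)) :=
      (Complex.continuous_ofReal.tendsto 0).comp h0
    simpa using (h1.mul hs).neg
  have h2 := hs.mul (hc.tendsto.comp hz)
  rw [dslope_same] at h2
  simp only [Complex.deriv_exp, Complex.exp_zero, mul_one] at h2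
  refine h2.congr' ?_
  filter_upwards [hh] with i hi
  have h3 := sub_smul_dslope Complex.exp 0 (-((h i : ℂ) * s i))
  simp only [sub_zero, smul_eq_mul, Complex.exp_zero] at h3
  have h4 : (h i : ℂ) ≠ 0 := by exact_mod_cast hi.ne'
  simp only [Function.comp]
  rw [eq_div_iff h4]
  linear_combination -h3

lemma tendsto_gl {ι : Type*} {l : Filter ι} {h : ι → ℝ} (hh : ∀ᶠ i in l, 0 < h i)
    (h0 : Tendsto h l (𝓝 0)) {s : ι → ℂ} {s0 : ℂ} (hs : Tendsto s l (𝓝 s0)) (hs0 : 0 < s0.re) :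
    Tendsto (fun i => gl (h i) (s i) - Real.log (h i)) l (𝓝 (Complex.log s0)) := by
  have h1 := (tendsto_one_sub_exp hh h0 hs).clog (Or.inl hs0)
  refine h1.congr' ?_
  have hre : ∀ᶠ i in l, 0 < (s i).re :=
    ((Complex.continuous_re.tendsto s0).comp hs).eventually (lt_mem_nhds hs0)
  filter_upwards [hh, hre] with i hi hi2
  have hne := Complex.slitPlane_ne_zero (slit hi hi2)
  have h4 : (h i : ℂ) ≠ 0 := by exact_mod_cast hi.ne'
  unfold gl
  conv_rhs => rw [← mul_div_cancel₀ (1 - Complex.exp (-(h i * s i))) h4]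
  rw [Complex.log_ofReal_mul hi (div_ne_zero hne h4)]
  ring

/-- Limiting terms. -/
noncomputable def T0 (x : ℂ) (n : ℕ) : ℂ :=
  Complex.log ((n + 1 : ℝ) + x) - Complex.log (n + 1 : ℝ) -
    x * (Complex.log ((n + 1 : ℝ) + 1) - Complex.log (n + 1 : ℝ))

lemma tendsto_Tt {ι : Type*} {l : Filter ι} {h : ι → ℝ} (hh : ∀ᶠ i in l, 0 < h i)
    (h0 : Tendsto h l (𝓝 0)) {x : ι → ℂ} {x0 : ℂ} (hx : Tendsto x l (𝓝 x0)) (hx0 : 0 < x0.re) 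
    (n : ℕ) : Tendsto (fun i => Tt (h i) (x i) n) l (𝓝 (T0 x0 n)) := by
  have a1 := tendsto_gl hh h0 (hx.const_add ((n + 1 : ℝ) : ℂ)) (by simp; positivity)
  have a2 := tendsto_gl hh h0 (tendsto_const_nhds (x := ((n + 1 : ℝ) : ℂ)) (f := l))
    (by simp; positivity)
  have a3 := tendsto_gl hh h0 (tendsto_const_nhds (x := ((n + 1 : ℝ) : ℂ) + 1) (f := l))
    (by simp; positivity)
  refine ((a1.sub a2).sub (hx.mul (a3.sub a2))).congr fun i => ?_
  unfold Tt
  ring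

lemma tendsto_sum_Tt {ι : Type*} {l : Filter ι} {h : ι → ℝ} (hh : ∀ᶠ i in l, 0 < h i)
    (h0 : Tendsto h l (𝓝 0)) {x : ι → ℂ} {x0 : ℂ} (hx : Tendsto x l (𝓝 x0)) (hx0 : 0 < x0.re) :
    Tendsto (fun i => ∑' n, Tt (h i) (x i) n) l (𝓝 (∑' n, T0 x0 n)) := by
  have hre : ∀ᶠ i in l, 0 < (x i).re :=
    ((Complex.continuous_re.tendsto x0).comp hx).eventually (lt_mem_nhds hx0)
  have hn : ∀ᶠ i in l, ‖x i‖ < ‖x0‖ + 1 := hx.norm.eventually (gt_mem_nhds (by linarith))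
  refine tendsto_tsum_of_dominated_convergence
    (bound := fun n : ℕ => ((‖x0‖ + 1) ^ 2 + (‖x0‖ + 1)) * (1 / ((n : ℝ) + 1) ^ 2))
    (summ_sq.mul_left _) (tendsto_Tt hh h0 hx hx0) ?_
  filter_upwards [hh, hre, hn] with i h1 h2 h3 n
  refine (Tt_bound h1 h2.le n).trans ?_
  gcongr

lemma T0_summable {x : ℂ} (hx : 0 < x.re) : Summable (T0 x) := by
  have h0 : Tendsto (fun n : ℕ => 1 / ((n : ℝ) + 1)) atTop (𝓝 0) :=
    tendsto_one_div_add_atTop_nhds_zero_nat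
  have hh : ∀ᶠ n : ℕ in atTop, (0 : ℝ) < 1 / ((n : ℝ) + 1) :=
    Eventually.of_forall fun n => by positivity
  refine Summable.of_norm_bounded (summ_sq.mul_left (‖x‖ ^ 2 + ‖x‖)) fun n => ?_
  refine le_of_tendsto (tendsto_Tt hh h0 (tendsto_const_nhds (x := x)) hx n).norm ?_
  filter_upwards [hh] with i hi
  exact Tt_bound hi hx.le n

lemma T0_partial {x : ℂ} (hx : 0 < x.re) (m : ℕ) :
    ∏ n ∈ Finset.range m, Complex.exp (T0 x n) =
      (∏ n ∈ Finset.range m, (x + ((n + 1 : ℕ) : ℂ))) / m.factorial *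
      Complex.exp (-(x * Complex.log (m + 1 : ℝ))) := by
  induction m with
  | zero => simp
  | succ m ih =>
    rw [Finset.prod_range_succ, ih, Finset.prod_range_succ, Nat.factorial_succ]
    have e1 : x + ((m + 1 : ℕ) : ℂ) = Complex.exp (Complex.log ((m + 1 : ℝ) + x)) := by
      rw [Complex.exp_log]
      · push_cast; ring
      · intro h; have := congrArg Complex.re h; simp at this
        have : (0 : ℝ) ≤ m := by positivity
        linarith
    have e2 : ((m + 1 : ℕ) : ℂ) = Complex.exp (Complex.log (m + 1 : ℝ)) := by
      rw [Complex.exp_log]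
      · push_cast; ring
      · exact_mod_cast (Nat.succ_ne_zero m)
    rw [Nat.cast_mul, e1, e2, mul_comm (Complex.exp _) (m.factorial : ℂ), mul_div_mul_comm,
      ← Complex.exp_sub, mul_assoc, mul_assoc, ← Complex.exp_add,
      ← Complex.exp_add]
    congr 2
    unfold T0
    push_cast
    ring

lemma T0_exp {x : ℂ} (hx : 0 < x.re) :
    Complex.exp (∑' n, T0 x n) = (Complex.Gamma (x + 1))⁻¹ := by
  have hx0 : x ≠ 0 := by rintro rfl; simp at hx
  have hG : Complex.Gamma x ≠ 0 := Complex.Gamma_ne_zero_of_re_pos hx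
  have h1 := (T0_summable hx).hasSum.cexp.tendsto_prod_nat
  have h2 := ((Complex.GammaSeq_tendsto_Gamma x).const_mul x).inv₀ (mul_ne_zero hx0 hG)
  have h3 : Tendsto (fun m : ℕ => Complex.exp (x * Complex.log ((m : ℂ) / (m + 1)))) atTop
      (𝓝 1) := by
    have : Tendsto (fun m : ℕ => (m : ℂ) / (m + 1)) atTop (𝓝 1) :=
      tendsto_natCast_div_add_atTop 1
    have := ((this.clog (by simp)).const_mul x).cexp
    simpa using this
  have h4 := h2.mul h3
  rw [← Complex.Gamma_add_one x hx0, mul_one] at h4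
  refine tendsto_nhds_unique h1 (h4.congr' ?_)
  filter_upwards [eventually_gt_atTop 0] with m hm
  have hm0 : (m : ℂ) ≠ 0 := by exact_mod_cast hm.ne'
  have hm' : (0 : ℝ) < m := by exact_mod_cast hm
  simp only [Function.comp_apply]
  rw [T0_partial hx, Complex.GammaSeq, Finset.prod_range_succ', Complex.cpow_def_of_ne_zero hm0]
  have e : Complex.log ((m : ℂ) / (m + 1)) = Complex.log m - Complex.log (m + 1 : ℝ) := by
    have := Real.log_div hm'.ne' (by positivity : (m : ℝ) + 1 ≠ 0)
    have h := congrArg Complex.ofReal this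
    rw [Complex.ofReal_sub, Complex.ofReal_log (by positivity), Complex.ofReal_log (by positivity),
      Complex.ofReal_log (by positivity)] at h
    simpa using h
  have hf : (m.factorial : ℂ) ≠ 0 := by exact_mod_cast m.factorial_ne_zero
  have hp : (∏ n ∈ Finset.range m, (x + ((n + 1 : ℕ) : ℂ))) ≠ 0 := by
    refine Finset.prod_ne_zero_iff.2 fun n _ h => ?_
    have := congrArg Complex.re h; simp at this
    have : (0 : ℝ) ≤ n := by positivity
    linarith
  rw [e, mul_sub, sub_eq_add_neg, Complex.exp_add, mul_comm (Complex.log m) x]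
  have hE := Complex.exp_ne_zero (x * Complex.log m)
  simp only [Nat.cast_zero, add_zero]
  field_simp

/-- Normalised q-Pochhammer symbol, `1/Γ_q` up to asymptotically trivial factors. -/
noncomputable def Fh (h : ℝ) (x : ℂ) : ℂ :=
  Ph h x / Ph h 1 * Complex.exp ((x - 1) * Real.log h)

lemma Fh_aux {ι : Type*} {l : Filter ι} {h : ι → ℝ} (hh : ∀ᶠ i in l, 0 < h i)
    (h0 : Tendsto h l (𝓝 0)) {x : ι → ℂ} {x0 : ℂ} (hx : Tendsto x l (𝓝 x0)) (hx0 : 1 < x0.re) :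
    Tendsto (fun i => Fh (h i) (x i)) l (𝓝 (Complex.Gamma x0)⁻¹) := by
  have hx1 := hx.sub_const 1
  have hp : 0 < (x0 - 1).re := by simpa using hx0
  have h1 := (tendsto_sum_Tt hh h0 hx1 hp).cexp
  rw [T0_exp hp, sub_add_cancel] at h1
  have h2 := (hx1.mul (tendsto_gl hh h0 (tendsto_const_nhds (x := (1 : ℂ)) (f := l))
    (by simp))).neg.cexp
  simp only [Complex.log_one, mul_zero, neg_zero, Complex.exp_zero] at h2
  have h3 := h1.mul h2
  rw [mul_one] at h3
  refine h3.congr' ?_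
  have hre : ∀ᶠ i in l, 0 < (x i - 1).re :=
    ((Complex.continuous_re.tendsto _).comp hx1).eventually (lt_mem_nhds hp)
  filter_upwards [hh, hre] with i hi hi2
  rw [Ph_exp hi hi2.le, sub_add_cancel, Fh, mul_assoc, ← Complex.exp_add]
  congr 2; ring

lemma Fh_tendsto {ι : Type*} {l : Filter ι} {h : ι → ℝ} (hh : ∀ᶠ i in l, 0 < h i)
    (h0 : Tendsto h l (𝓝 0)) {x : ι → ℂ} {x0 : ℂ} (hx : Tendsto x l (𝓝 x0)) :
    Tendsto (fun i => Fh (h i) (x i)) l (𝓝 (Complex.Gamma x0)⁻¹) := by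
  obtain ⟨k, hk⟩ : ∃ k : ℕ, 1 - x0.re < k := exists_nat_gt _
  induction k generalizing x x0 with
  | zero => exact Fh_aux hh h0 hx (by simp at hk; linarith)
  | succ k ih =>
    have h1 := ih (hx.add_const 1) (by push_cast at hk; simp; linarith)
    have h2 := (tendsto_one_sub_exp hh h0 hx).mul h1
    rw [← Complex.one_div_Gamma_eq_self_mul_one_div_Gamma_add_one] at h2
    refine h2.congr' ?_
    filter_upwards [hh] with i hi
    have h4 : (h i : ℂ) ≠ 0 := by exact_mod_cast hi.ne'
    have e : Complex.exp ((x i + 1 - 1) * Real.log (h i)) =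
        h i * Complex.exp ((x i - 1) * Real.log (h i)) := by
      have : (h i : ℂ) = Complex.exp (Real.log (h i)) := by
        rw [← Complex.ofReal_exp, Real.exp_log hi]
      conv_rhs => rw [this]
      rw [← Complex.exp_add]
      congr 1; ring
    rw [Fh, Fh, Ph_succ hi (x i), e]
    field_simp

/-- Normalised `(-q^x;q)_∞`. -/
noncomputable def Gh (h : ℝ) (x : ℂ) : ℂ := Mh h x / Mh h 1

lemma Gh_tendsto {ι : Type*} {l : Filter ι} {h : ι → ℝ} (hh : ∀ᶠ i in l, 0 < h i)
    (h0 : Tendsto h l (𝓝 0)) {x : ι → ℂ} {x0 : ℂ} (hx : Tendsto x l (𝓝 x0)) :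
    Tendsto (fun i => Gh (h i) (x i)) l (𝓝 (Complex.exp ((1 - x0) * Real.log 2))) := by
  obtain ⟨k, hk⟩ : ∃ k : ℕ, -x0.re < k := exists_nat_gt _
  induction k generalizing x x0 with
  | zero =>
    have hx0 : 0 < x0.re := by simp at hk; linarith
    have hG : Complex.Gamma x0 ≠ 0 := Complex.Gamma_ne_zero_of_re_pos hx0
    have h1 := Fh_tendsto hh h0 hx
    have h2 := Fh_tendsto (h := fun i => 2 * h i) (by filter_upwards [hh] with i hi; positivity)
      (by simpa using h0.const_mul 2) hx
    have h3 := (h2.div h1 (inv_ne_zero hG)).mul ((hx.const_sub 1).mul_const (Real.log 2 : ℂ)).cexp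
    rw [div_self (inv_ne_zero hG), one_mul] at h3
    refine h3.congr' ?_
    filter_upwards [hh, h1.eventually_ne (inv_ne_zero hG)] with i hi hne
    have hP : Ph (h i) (x i) ≠ 0 := by
      intro h; apply hne; simp [Fh, h]
    have hP1 := Ph_one_ne hi
    have hM1 := Mh_one_ne hi
    simp only [Pi.div_apply]
    rw [Gh, Fh, Fh, ← Mh_mul_Ph hi, ← Mh_mul_Ph hi, Real.log_mul two_ne_zero hi.ne']
    rw [Complex.ofReal_add, mul_add, Complex.exp_add]
    have e : Complex.exp ((x i - 1) * (Real.log 2 : ℝ)) *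
        Complex.exp ((1 - x i) * (Real.log 2 : ℝ)) = 1 := by
      rw [← Complex.exp_add, ← Complex.exp_zero]; congr 1; ring
    have hE := Complex.exp_ne_zero ((x i - 1) * Real.log (h i))
    generalize Complex.exp ((x i - 1) * Real.log (h i)) = E1 at *
    generalize Complex.exp ((x i - 1) * (Real.log 2 : ℝ)) = E2 at *
    generalize Complex.exp ((1 - x i) * (Real.log 2 : ℝ)) = E3 at *
    field_simp
    linear_combination (Mh (h i) (x i)) * e
  | succ k ih =>
    have h1 := ih (hx.add_const 1) (by push_cast at hk; simp; linarith)
    have hz : Tendsto (fun i => 1 + Complex.exp (-((h i : ℂ) * x i))) l (𝓝 2) := by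
      have h1 : Tendsto (fun i => (h i : ℂ)) l (𝓝 ((0 : ℝ) : ℂ)) :=
        (Complex.continuous_ofReal.tendsto 0).comp h0
      have := ((h1.mul hx).neg.cexp).const_add 1
      convert this using 2
      simp; norm_num
    have h2 := hz.mul h1
    have e : (2 : ℂ) * Complex.exp ((1 - (x0 + 1)) * Real.log 2) =
        Complex.exp ((1 - x0) * Real.log 2) := by
      have : (2 : ℂ) = Complex.exp (Real.log 2) := by
        rw [← Complex.ofReal_exp, Real.exp_log two_pos]; simp
      conv_lhs => enter [1]; rw [this]
      rw [← Complex.exp_add]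
      congr 1; ring
    rw [e] at h2
    refine h2.congr' ?_
    filter_upwards [hh] with i hi
    rw [Gh, Gh, Mh_succ hi (x i), mul_div_assoc]

lemma qN_eq (N : ℕ) : ((qN N : ℝ) : ℂ) = Complex.exp (-((2 / Real.sqrt N : ℝ) : ℂ)) := by
  rw [qN, ← Complex.ofReal_neg, ← Complex.ofReal_exp, neg_div]

lemma qpow_eq (N : ℕ) (x : ℝ) : qpow N x = Complex.exp (-((2 / Real.sqrt N : ℝ) * (x : ℂ))) := by
  rw [qpow, ← Complex.ofReal_mul, ← Complex.ofReal_neg, ← Complex.ofReal_exp]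
  congr 2; ring

lemma L1 (N : ℕ) : qPochInf ((qN N : ℝ) : ℂ) (qN N) = Ph (2 / Real.sqrt N) 1 := by
  rw [qN_eq, Ph, mul_one]

lemma L2 (N : ℕ) (x : ℝ) : qPochInf (qpow N x) (qN N) = Ph (2 / Real.sqrt N) x := by
  rw [qN_eq, Ph, qpow_eq]

lemma L3 (N : ℕ) (x : ℝ) : qPochInf (-(qpow N x)) (qN N) = Mh (2 / Real.sqrt N) x := by
  rw [qN_eq, Mh, qpow_eq]

lemma eI_eq {h : ℝ} (hh : h ≠ 0) (x a : ℝ) :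
    Complex.exp (-(h * (x : ℂ))) * eI a =
      Complex.exp (-(h * ((x : ℂ) - ((a / h : ℝ) : ℂ) * Complex.I))) := by
  have : (h : ℂ) ≠ 0 := by exact_mod_cast hh
  rw [eI, ← Complex.exp_add]
  congr 1
  push_cast
  field_simp
  ring

lemma hpos {N : ℕ} (hN : 0 < N) : 0 < 2 / Real.sqrt N := by positivity

lemma L4 {N : ℕ} (hN : 0 < N) (x a : ℝ) : qPochInf (qpow N x * eI a) (qN N) =
    Ph (2 / Real.sqrt N) ((x : ℂ) - ((a / (2 / Real.sqrt N) : ℝ) : ℂ) * Complex.I) := by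
  rw [qN_eq, Ph, qpow_eq, eI_eq (hpos hN).ne']

lemma L5 {N : ℕ} (hN : 0 < N) (x a : ℝ) : qPochInf (-(qpow N x) * eI a) (qN N) =
    Mh (2 / Real.sqrt N) ((x : ℂ) - ((a / (2 / Real.sqrt N) : ℝ) : ℂ) * Complex.I) := by
  rw [qN_eq, Mh, qpow_eq, neg_mul, eI_eq (hpos hN).ne']

lemma L6 {N : ℕ} (hN : 0 < N) (a : ℝ) : qPochInf (eI a) (qN N) =
    Ph (2 / Real.sqrt N) (((0 : ℝ) : ℂ) - ((a / (2 / Real.sqrt N) : ℝ) : ℂ) * Complex.I) := by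
  rw [qN_eq, Ph, ← eI_eq (hpos hN).ne']
  simp

lemma Ph_eq {h : ℝ} (hh : 0 < h) (x : ℂ) :
    Ph h x = Fh h x * Ph h 1 * Complex.exp ((1 - x) * Real.log h) := by
  have := Ph_one_ne hh
  have e : Complex.exp ((x - 1) * Real.log h) * Complex.exp ((1 - x) * Real.log h) = 1 := by
    rw [← Complex.exp_add, ← Complex.exp_zero]; congr 1; ring
  rw [Fh]
  generalize Complex.exp ((x - 1) * Real.log h) = E1 at *
  generalize Complex.exp ((1 - x) * Real.log h) = E2 at *
  field_simp
  linear_combination -(Ph h x) * e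

lemma Mh_eq {h : ℝ} (hh : 0 < h) (x : ℂ) : Mh h x = Gh h x * Mh h 1 := by
  have := Mh_one_ne hh
  rw [Gh]; field_simp

lemma h_tendsto : Tendsto (fun N : ℕ => 2 / Real.sqrt N) atTop (𝓝 0) :=
  tendsto_const_nhds.div_atTop (Real.tendsto_sqrt_atTop.comp tendsto_natCast_atTop_atTop)

lemma arccos_eq {s : ℝ} (h0 : 0 ≤ s) (h1 : s ≤ 1) :
    Real.arccos (1 - 2 * s ^ 2) = 2 * Real.arcsin s := by
  have e : Real.cos (2 * Real.arcsin s) = 1 - 2 * s ^ 2 := by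
    rw [Real.cos_two_mul, Real.cos_sq', Real.sin_arcsin (by linarith) h1]; ring
  rw [← e, Real.arccos_cos]
  · have := Real.arcsin_nonneg.2 h0; linarith
  · have := Real.arcsin_le_pi_div_two s; linarith

lemma theta_tendsto {y : ℝ} (hy : 0 < y) :
    Tendsto (fun N : ℕ => Real.arccos (1 - y / (2 * (N : ℝ))) / (2 / Real.sqrt N)) atTop
      (𝓝 (Real.sqrt y / 2)) := by
  have hd : HasDerivAt Real.arcsin 1 0 := by
    have := Real.hasDerivAt_arcsin (x := 0) (by norm_num) (by norm_num)
    simpa using this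
  have hs := hasDerivAt_iff_tendsto_slope.1 hd
  have hsy : 0 < Real.sqrt y := Real.sqrt_pos.2 hy
  have hc : Tendsto (fun N : ℕ => (Real.sqrt y / 4) * (2 / Real.sqrt N)) atTop (𝓝 0) := by
    simpa using h_tendsto.const_mul (Real.sqrt y / 4)
  have hc' : Tendsto (fun N : ℕ => (Real.sqrt y / 4) * (2 / Real.sqrt N)) atTop (𝓝[≠] 0) := by
    refine tendsto_nhdsWithin_iff.2 ⟨hc, ?_⟩
    filter_upwards [eventually_gt_atTop 0] with N hN
    have := hpos hN
    simp only [Set.mem_compl_iff, Set.mem_singleton_iff]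
    positivity
  have h2 := (hs.comp hc').const_mul (Real.sqrt y / 2)
  rw [mul_one] at h2
  refine h2.congr' ?_
  filter_upwards [eventually_gt_atTop 0, hc.eventually (gt_mem_nhds one_pos)] with N hN h1
  have hh := hpos hN
  have hN' : (0 : ℝ) < N := by exact_mod_cast hN
  have e : 1 - y / (2 * (N : ℝ)) = 1 - 2 * ((Real.sqrt y / 4) * (2 / Real.sqrt N)) ^ 2 := by
    rw [mul_pow, div_pow, div_pow, Real.sq_sqrt hy.le, Real.sq_sqrt hN'.le]
    ring
  rw [e, arccos_eq (by positivity) h1.le]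
  simp only [Function.comp_apply, slope_def_field, Real.arcsin_zero, sub_zero]
  field_simp
  norm_num

lemma combine (n p m c s1 s2 K : ℂ)
    (f1 f2 f3 f4 f5 f6 f7 f8 f9 e1 e2 e3 e4 e5 e6 e7 e8 e9 g1 g2 g3 g4 g5 g6 g7 g8 : ℂ)
    (hp : p ≠ 0) (hm : m ≠ 0) (hK : n * (e1 * e2 * e3 * e4) / (c * s1 * (e5 * e6 * e7 * e8 * e9)) = K) :
    n * ((p * (g1 * m) * (f1 * p * e1) * (g2 * m) * (g3 * m) * (f2 * p * e2) * (g4 * m) *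
      (f3 * p * e3) * (f4 * p * e4)) /
      (c * (f5 * p * e5) * s1 * s2 *
        (((f6 * p * e6) * (g5 * m) * (f7 * p * e7) * (g6 * m)) *
         ((f8 * p * e8) * (g7 * m) * (f9 * p * e9) * (g8 * m))))) =
    K * ((f1 * f2 * f3 * f4 * (g1 * g2 * g3 * g4)) /
      (s2 * (f5 * f6 * f7 * f8 * f9) * (g5 * g6 * g7 * g8))) := by
  have hA : p ^ 5 * m ^ 4 ≠ 0 := by positivity
  rw [← hK]
  rw [show (p * (g1 * m) * (f1 * p * e1) * (g2 * m) * (g3 * m) * (f2 * p * e2) * (g4 * m) *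
      (f3 * p * e3) * (f4 * p * e4)) = (p ^ 5 * m ^ 4) * ((e1 * e2 * e3 * e4) *
        (f1 * f2 * f3 * f4 * (g1 * g2 * g3 * g4))) by ring,
    show (c * (f5 * p * e5) * s1 * s2 *
        (((f6 * p * e6) * (g5 * m) * (f7 * p * e7) * (g6 * m)) *
         ((f8 * p * e8) * (g7 * m) * (f9 * p * e9) * (g8 * m)))) =
      (p ^ 5 * m ^ 4) * ((c * s1 * (e5 * e6 * e7 * e8 * e9)) *
        (s2 * (f5 * f6 * f7 * f8 * f9) * (g5 * g6 * g7 * g8))) by ring,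
    mul_div_mul_left _ _ hA, mul_div_mul_comm]
  ring

lemma Gamma_ne {x c : ℝ} (hc : c ≠ 0) : Complex.Gamma ((x : ℂ) - (c : ℂ) * Complex.I) ≠ 0 := by
  refine Complex.Gamma_ne_zero fun m hm => hc ?_
  have := congrArg Complex.im hm
  simpa using this

lemma K_eq {N : ℕ} (hN : 0 < N) {y : ℝ} (hy : 0 < y) (u v w r t b c : ℝ) (L : ℝ)
    (hL : L = Real.log (2 / Real.sqrt N)) :
    Complex.ofReal ((N : ℝ) ^ (u + v)) *
      (Complex.exp ((1 - ((u + v : ℝ) : ℂ)) * L) * Complex.exp ((1 - ((w + r : ℝ) : ℂ)) * L) *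
       Complex.exp ((1 - (((0 : ℝ) : ℂ) - ((c : ℝ) : ℂ) * Complex.I)) * L) *
       Complex.exp ((1 - (((0 : ℝ) : ℂ) - ((-c : ℝ) : ℂ) * Complex.I)) * L)) /
      (Complex.ofReal (4 * Real.pi * (N : ℝ)) * Complex.ofReal (Real.sqrt (y / (N : ℝ))) *
       (Complex.exp ((1 - ((u + v + w + r : ℝ) : ℂ)) * L) *
       Complex.exp ((1 - (((v + t / 2 : ℝ) : ℂ) - ((b : ℝ) : ℂ) * Complex.I)) * L) *
       Complex.exp ((1 - (((u - t / 2 : ℝ) : ℂ) - ((b : ℝ) : ℂ) * Complex.I)) * L) *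
       Complex.exp ((1 - (((v + t / 2 : ℝ) : ℂ) - ((-b : ℝ) : ℂ) * Complex.I)) * L) *
       Complex.exp ((1 - (((u - t / 2 : ℝ) : ℂ) - ((-b : ℝ) : ℂ) * Complex.I)) * L))) =
    Complex.exp (2 * (u + v) * (Real.log 2 : ℝ)) / Complex.ofReal (8 * Real.pi * Real.sqrt y) := by
  have hN' : (0 : ℝ) < N := by exact_mod_cast hN
  have hsN : 0 < Real.sqrt N := Real.sqrt_pos.2 hN'
  have hsy : 0 < Real.sqrt y := Real.sqrt_pos.2 hy
  have hlog : Real.log N = 2 * Real.log 2 - 2 * L := by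
    rw [hL, Real.log_div two_ne_zero hsN.ne', Real.log_sqrt hN'.le]; ring
  have hn : Complex.ofReal ((N : ℝ) ^ (u + v)) =
      Complex.exp ((u + v) * (2 * (Real.log 2 : ℝ) - 2 * L)) := by
    rw [Real.rpow_def_of_pos hN', hlog, Complex.ofReal_exp]
    congr 1; push_cast; ring
  have hexpL : Complex.exp L = ((2 / Real.sqrt N : ℝ) : ℂ) := by
    rw [hL, ← Complex.ofReal_exp, Real.exp_log (hpos hN)]
  have hs : 4 * Real.pi * (N : ℝ) * Real.sqrt (y / (N : ℝ)) * (2 / Real.sqrt N) =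
      8 * Real.pi * Real.sqrt y := by
    rw [Real.sqrt_div hy.le]
    have : (N : ℝ) = Real.sqrt N ^ 2 := (Real.sq_sqrt hN'.le).symm
    field_simp
    rw [← this]
    ring
  rw [← hs, Complex.ofReal_mul _ (2 / Real.sqrt N), ← hexpL, Complex.ofReal_mul _ (Real.sqrt _), hn,
    div_eq_div_iff]
  · generalize Complex.ofReal (4 * Real.pi * (N : ℝ)) * Complex.ofReal (Real.sqrt (y / (N : ℝ))) = C
    rw [mul_left_comm _ C, mul_left_comm _ C]
    congr 1
    simp only [← Complex.exp_add]
    congr 1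
    push_cast
    ring
  · refine mul_ne_zero (mul_ne_zero ?_ ?_) (by simp [Complex.exp_ne_zero])
    · exact Complex.ofReal_ne_zero.2 (by positivity)
    · exact Complex.ofReal_ne_zero.2 (by positivity)
  · refine mul_ne_zero (mul_ne_zero ?_ ?_) (Complex.exp_ne_zero _)
    · exact Complex.ofReal_ne_zero.2 (by positivity)
    · exact Complex.ofReal_ne_zero.2 (by positivity)

theorem statement0 (u v w r t y : ℝ) (huv : 0 < u + v) (hw : 0 < w) (hr : 0 < r)
    (ht1 : -(2 * w) < t) (ht2 : t < 2 * r) (hy : 0 < y) :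
    Tendsto (fun N : ℕ =>
      Complex.ofReal ((N : ℝ) ^ (u + v)) *
      ((qPochInf (Complex.ofReal (qN N)) (qN N) *
        qPochInf (-(qpow N (v + w + t))) (qN N) *
        qPochInf (qpow N (u + v)) (qN N) *
        qPochInf (-(qpow N (v + r))) (qN N) *
        qPochInf (-(qpow N (u + w))) (qN N) *
        qPochInf (qpow N (w + r)) (qN N) *
        qPochInf (-(qpow N (u + r - t))) (qN N) *
        qPochInf (eI (2 * Real.arccos (1 - y / (2 * (N : ℝ))))) (qN N) *
        qPochInf (eI (-2 * Real.arccos (1 - y / (2 * (N : ℝ))))) (qN N)) /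
       (Complex.ofReal (4 * Real.pi * (N : ℝ)) * qPochInf (qpow N (u + v + w + r)) (qN N) *
        Complex.ofReal (Real.sqrt (y / (N : ℝ))) *
        Complex.ofReal (Real.sqrt (1 - y / (4 * (N : ℝ)))) *
        ((qPochInf (qpow N (v + t / 2) * eI (Real.arccos (1 - y / (2 * (N : ℝ))))) (qN N) *
          qPochInf (-(qpow N (w + t / 2)) * eI (Real.arccos (1 - y / (2 * (N : ℝ))))) (qN N) *
          qPochInf (qpow N (u - t / 2) * eI (Real.arccos (1 - y / (2 * (N : ℝ))))) (qN N) *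
          qPochInf (-(qpow N (r - t / 2)) * eI (Real.arccos (1 - y / (2 * (N : ℝ))))) (qN N)) *
         (qPochInf (qpow N (v + t / 2) * eI (-(Real.arccos (1 - y / (2 * (N : ℝ)))))) (qN N) *
          qPochInf (-(qpow N (w + t / 2)) * eI (-(Real.arccos (1 - y / (2 * (N : ℝ)))))) (qN N) *
          qPochInf (qpow N (u - t / 2) * eI (-(Real.arccos (1 - y / (2 * (N : ℝ)))))) (qN N) *
          qPochInf (-(qpow N (r - t / 2)) * eI (-(Real.arccos (1 - y / (2 * (N : ℝ)))))) (qN N))))))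
      atTop
      (nhds (Complex.Gamma ((u + v + w + r : ℝ) : ℂ) * GammaSq (v + t / 2) (Real.sqrt y / 2) *
        GammaSq (u - t / 2) (Real.sqrt y / 2) /
        (Complex.ofReal (8 * Real.pi) * Complex.Gamma ((u + v : ℝ) : ℂ) *
         Complex.Gamma ((w + r : ℝ) : ℂ) * Complex.ofReal (Real.sqrt y) *
         GammaSq 0 (Real.sqrt y)))) := by
  set th : ℕ → ℝ := fun N => Real.arccos (1 - y / (2 * (N : ℝ))) with hth
  set b : ℕ → ℝ := fun N => th N / (2 / Real.sqrt N) with hb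
  have hsy : 0 < Real.sqrt y := Real.sqrt_pos.2 hy
  have hbt : Tendsto b atTop (𝓝 (Real.sqrt y / 2)) := theta_tendsto hy
  have hh : ∀ᶠ N : ℕ in atTop, 0 < 2 / Real.sqrt N := by
    filter_upwards [eventually_gt_atTop 0] with N hN using hpos hN
  have hx : ∀ (x : ℝ) {c : ℕ → ℝ} {c0 : ℝ}, Tendsto c atTop (𝓝 c0) →
      Tendsto (fun N => (x : ℂ) - ((c N : ℝ) : ℂ) * Complex.I) atTop
        (𝓝 ((x : ℂ) - (c0 : ℂ) * Complex.I)) := by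
    intro x c c0 hc
    exact (((Complex.continuous_ofReal.tendsto c0).comp hc).mul_const _).const_sub _
  have F0 := fun (x : ℝ) => Fh_tendsto hh h_tendsto (tendsto_const_nhds (x := (x : ℂ)))
  have G0 := fun (x : ℝ) => Gh_tendsto hh h_tendsto (tendsto_const_nhds (x := (x : ℂ)))
  have F1 := fun (x : ℝ) => Fh_tendsto hh h_tendsto (hx x hbt)
  have G1 := fun (x : ℝ) => Gh_tendsto hh h_tendsto (hx x hbt)
  have F2 := fun (x : ℝ) => Fh_tendsto hh h_tendsto (hx x hbt.neg)
  have G2 := fun (x : ℝ) => Gh_tendsto hh h_tendsto (hx x hbt.neg)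
  have hb2 : Tendsto (fun N => 2 * b N) atTop (𝓝 (Real.sqrt y)) := by
    have := hbt.const_mul 2
    rwa [mul_div_cancel₀ _ two_ne_zero] at this
  have F3 := Fh_tendsto hh h_tendsto (hx 0 hb2)
  have F4 := Fh_tendsto hh h_tendsto (hx 0 hb2.neg)
  have hS : Tendsto (fun N : ℕ => Complex.ofReal (Real.sqrt (1 - y / (4 * (N : ℝ))))) atTop
      (𝓝 1) := by
    have h1 : Tendsto (fun N : ℕ => y / (4 * (N : ℝ))) atTop (𝓝 0) :=
      tendsto_const_nhds.div_atTop (tendsto_natCast_atTop_atTop.const_mul_atTop (by norm_num))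
    have h2 := ((Complex.continuous_ofReal.tendsto _).comp (h1.const_sub 1).sqrt)
    simpa [Function.comp_def] using h2
  have hb0 : Real.sqrt y / 2 ≠ 0 := by positivity
  have hb0' : -(Real.sqrt y / 2) ≠ 0 := by simpa using hsy.ne'
  have hsum : 0 < u + v + w + r := by linarith
  have hnum := (((((F0 (u + v)).mul (F0 (w + r))).mul F3).mul F4)).mul
    ((((G0 (v + w + t)).mul (G0 (v + r))).mul (G0 (u + w))).mul (G0 (u + r - t)))
  have hden := (hS.mul (((((F0 (u + v + w + r)).mul (F1 (v + t / 2))).mul (F1 (u - t / 2))).mul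
    (F2 (v + t / 2))).mul (F2 (u - t / 2)))).mul
    ((((G1 (w + t / 2)).mul (G1 (r - t / 2))).mul (G2 (w + t / 2))).mul (G2 (r - t / 2)))
  have hG0 : Complex.Gamma ((u + v + w + r : ℝ) : ℂ) ≠ 0 :=
    Complex.Gamma_ne_zero_of_re_pos (by rw [Complex.ofReal_re]; exact hsum)
  have hall := (hnum.div hden (by
    refine mul_ne_zero (mul_ne_zero one_ne_zero ?_) (by simp [Complex.exp_ne_zero])
    exact mul_ne_zero (mul_ne_zero (mul_ne_zero (mul_ne_zero (inv_ne_zero hG0)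
      (inv_ne_zero (Gamma_ne hb0))) (inv_ne_zero (Gamma_ne hb0))) (inv_ne_zero (Gamma_ne hb0')))
      (inv_ne_zero (Gamma_ne hb0')))).const_mul
      (Complex.exp (2 * (u + v) * (Real.log 2 : ℝ)) / Complex.ofReal (8 * Real.pi * Real.sqrt y))
  convert hall.congr' ?_ using 2
  · have key : Complex.exp (2 * (u + v) * (Real.log 2 : ℝ)) *
        (Complex.exp ((1 - ((v + w + t : ℝ) : ℂ)) * (Real.log 2 : ℝ)) *
         Complex.exp ((1 - ((v + r : ℝ) : ℂ)) * (Real.log 2 : ℝ)) *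
         Complex.exp ((1 - ((u + w : ℝ) : ℂ)) * (Real.log 2 : ℝ)) *
         Complex.exp ((1 - ((u + r - t : ℝ) : ℂ)) * (Real.log 2 : ℝ))) *
        (Complex.exp ((1 - (((w + t / 2 : ℝ) : ℂ) - ((√y / 2 : ℝ) : ℂ) * Complex.I)) *
            (Real.log 2 : ℝ)) *
         Complex.exp ((1 - (((r - t / 2 : ℝ) : ℂ) - ((√y / 2 : ℝ) : ℂ) * Complex.I)) *
            (Real.log 2 : ℝ)) *
         Complex.exp ((1 - (((w + t / 2 : ℝ) : ℂ) - ((-(√y / 2) : ℝ) : ℂ) * Complex.I)) *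
            (Real.log 2 : ℝ)) *
         Complex.exp ((1 - (((r - t / 2 : ℝ) : ℂ) - ((-(√y / 2) : ℝ) : ℂ) * Complex.I)) *
            (Real.log 2 : ℝ)))⁻¹ = 1 := by
      simp only [← Complex.exp_add, ← Complex.exp_neg]
      rw [← Complex.exp_zero]
      congr 1
      push_cast
      ring
    refine ((mul_one _).symm.trans (congrArg (HMul.hMul _) key.symm)).trans ?_
    unfold GammaSq
    have hng : ∀ x c : ℝ, (x : ℂ) - ((-c : ℝ) : ℂ) * Complex.I = (x : ℂ) + (c : ℂ) * Complex.I := by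
      intro x c; push_cast; ring
    rw [← hng, ← hng, ← hng, Complex.ofReal_mul (8 * Real.pi)]
    clear key hall hden hnum F0 F1 F2 F3 F4 G0 G1 G2 hS hx hb2 hbt
    simp only [div_eq_mul_inv, mul_inv, inv_inv]
    ring
  · filter_upwards [eventually_gt_atTop 0] with N hN
    have hp := hpos hN
    have en : -(th N) / (2 / Real.sqrt N) = -(b N) := by simp only [hb]; ring
    have e2 : 2 * th N / (2 / Real.sqrt N) = 2 * b N := by simp only [hb]; ring
    have en2 : -2 * th N / (2 / Real.sqrt N) = -(2 * b N) := by simp only [hb]; ring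
    have e1 : th N / (2 / Real.sqrt N) = b N := rfl
    change _ = Complex.ofReal ((N : ℝ) ^ (u + v)) *
      ((qPochInf (Complex.ofReal (qN N)) (qN N) *
        qPochInf (-(qpow N (v + w + t))) (qN N) *
        qPochInf (qpow N (u + v)) (qN N) *
        qPochInf (-(qpow N (v + r))) (qN N) *
        qPochInf (-(qpow N (u + w))) (qN N) *
        qPochInf (qpow N (w + r)) (qN N) *
        qPochInf (-(qpow N (u + r - t))) (qN N) *
        qPochInf (eI (2 * th N)) (qN N) *
        qPochInf (eI (-2 * th N)) (qN N)) /
       (Complex.ofReal (4 * Real.pi * (N : ℝ)) * qPochInf (qpow N (u + v + w + r)) (qN N) *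
        Complex.ofReal (Real.sqrt (y / (N : ℝ))) *
        Complex.ofReal (Real.sqrt (1 - y / (4 * (N : ℝ)))) *
        ((qPochInf (qpow N (v + t / 2) * eI (th N)) (qN N) *
          qPochInf (-(qpow N (w + t / 2)) * eI (th N)) (qN N) *
          qPochInf (qpow N (u - t / 2) * eI (th N)) (qN N) *
          qPochInf (-(qpow N (r - t / 2)) * eI (th N)) (qN N)) *
         (qPochInf (qpow N (v + t / 2) * eI (-(th N))) (qN N) *
          qPochInf (-(qpow N (w + t / 2)) * eI (-(th N))) (qN N) *
          qPochInf (qpow N (u - t / 2) * eI (-(th N))) (qN N) *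
          qPochInf (-(qpow N (r - t / 2)) * eI (-(th N))) (qN N)))))
    simp only [L4 hN, L5 hN, L6 hN, L2, L3, L1, en, e2, en2, e1]
    rw [Ph_eq hp ((u + v : ℝ) : ℂ), Ph_eq hp ((w + r : ℝ) : ℂ),
      Ph_eq hp ((u + v + w + r : ℝ) : ℂ),
      Ph_eq hp (((0 : ℝ) : ℂ) - ((2 * b N : ℝ) : ℂ) * Complex.I),
      Ph_eq hp (((0 : ℝ) : ℂ) - ((-(2 * b N) : ℝ) : ℂ) * Complex.I),
      Ph_eq hp (((v + t / 2 : ℝ) : ℂ) - ((b N : ℝ) : ℂ) * Complex.I),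
      Ph_eq hp (((v + t / 2 : ℝ) : ℂ) - ((-b N : ℝ) : ℂ) * Complex.I),
      Ph_eq hp (((u - t / 2 : ℝ) : ℂ) - ((b N : ℝ) : ℂ) * Complex.I),
      Ph_eq hp (((u - t / 2 : ℝ) : ℂ) - ((-b N : ℝ) : ℂ) * Complex.I),
      Mh_eq hp ((v + w + t : ℝ) : ℂ), Mh_eq hp ((v + r : ℝ) : ℂ), Mh_eq hp ((u + w : ℝ) : ℂ),
      Mh_eq hp ((u + r - t : ℝ) : ℂ),
      Mh_eq hp (((w + t / 2 : ℝ) : ℂ) - ((b N : ℝ) : ℂ) * Complex.I),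
      Mh_eq hp (((w + t / 2 : ℝ) : ℂ) - ((-b N : ℝ) : ℂ) * Complex.I),
      Mh_eq hp (((r - t / 2 : ℝ) : ℂ) - ((b N : ℝ) : ℂ) * Complex.I),
      Mh_eq hp (((r - t / 2 : ℝ) : ℂ) - ((-b N : ℝ) : ℂ) * Complex.I)]
    rw [combine _ _ _ _ _ _ _ _ _ _ _ _ _ _ _ _ _ _ _ _ _ _ _ _ _ _ _ _ _ _ _ _ _
      (Ph_one_ne hp) (Mh_one_ne hp) (K_eq hN hy u v w r t (b N) (2 * b N) _ rfl)]
    rfl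
end

section
/- Fix real numbers u, v, w, r, t with u+v > 0, w > 0, r > 0, −2w < t < 2r and v + t/2 < 0. With q = q_N = exp(−2/√N), the limit as N → ∞ of N^{u+v} · (q^{−2v−t};q)_∞ (−q^{w+u};q)_∞ (q^{w+r};q)_∞ (−q^{r+u−t};q)_∞ / [ (−q^{w−v};q)_∞ (q^{u−v−t};q)_∞ (−q^{r−v−t};q)_∞ (q^{u+v+w+r};q)_∞ ] exists and equals Γ(u+v+w+r) Γ(u−v−t) / ( Γ(−2v−t) Γ(w+r) ). -/
open Filter

/-- Telescoping of a one-step recursion. -/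
lemma aux_shift (F l : ℝ → ℝ) (hF : ∀ x, 0 < x → F (x + 1) - F x = l x) (x : ℝ) (hx : 0 < x)
    (n : ℕ) : F (x + n) = F x + ∑ k ∈ Finset.range n, l (x + k) := by
  induction n with
  | zero => simp
  | succ n ih =>
    have h := hF (x + n) (by positivity)
    rw [Finset.sum_range_succ, ← add_assoc, ← ih]
    push_cast
    rw [← add_assoc]; linarith

/-- The Bohr–Mollerup type sandwich. -/
lemma aux_sandwich (F l : ℝ → ℝ) (hc : ConvexOn ℝ (Set.Ioi 0) F)
    (hF : ∀ x, 0 < x → F (x + 1) - F x = l x) (A s : ℝ) (hA : 0 < A) (hs : 0 < s) (m : ℕ) :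
    s * l (A + m) - ∑ k ∈ Finset.range (m + 1), (l (A + s + k) - l (A + k)) ≤ F (A + s) - F A ∧
    F (A + s) - F A ≤
      s * l (A + m + 1 + s) - ∑ k ∈ Finset.range (m + 1), (l (A + s + k) - l (A + k)) := by
  have e1 := aux_shift F l hF (A + s) (by positivity) (m + 1)
  have e2 := aux_shift F l hF A hA (m + 1)
  rw [Finset.sum_sub_distrib]
  have hm : (0 : ℝ) ≤ m := by positivity
  have c1 := hc.slope_mono_adjacent (x := A + m) (y := A + m + 1) (z := A + m + 1 + s)
    (Set.mem_Ioi.2 (by positivity)) (Set.mem_Ioi.2 (by positivity)) (by linarith) (by linarith)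
  have c2 := hc.slope_mono_adjacent (x := A + m + 1) (y := A + m + 1 + s) (z := A + m + 1 + s + 1)
    (Set.mem_Ioi.2 (by positivity)) (Set.mem_Ioi.2 (by positivity)) (by linarith) (by linarith)
  rw [hF _ (by positivity)] at c1 c2
  have g1 := hF (A + m) (by positivity)
  have g2 := hF (A + m + 1 + s) (by positivity)
  rw [show A + (m : ℝ) + 1 - (A + m) = 1 by ring,
    show A + (m : ℝ) + 1 + s - (A + m + 1) = s by ring, div_one, le_div_iff₀ hs] at c1
  rw [show A + (m : ℝ) + 1 + s + 1 - (A + m + 1 + s) = 1 by ring,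
    show A + (m : ℝ) + 1 + s - (A + m + 1) = s by ring, div_one, div_le_iff₀ hs] at c2
  push_cast at e1 e2
  rw [show A + s + ((m : ℝ) + 1) = A + m + 1 + s by ring] at e1
  rw [show A + ((m : ℝ) + 1) = A + m + 1 by ring] at e2
  constructor <;> nlinarith

lemma aux_limit (F l : ℕ → ℝ → ℝ) (G L : ℝ → ℝ)
    (hc : ∀ᶠ N in atTop, ConvexOn ℝ (Set.Ioi 0) (F N))
    (hF : ∀ᶠ N in atTop, ∀ x, 0 < x → F N (x + 1) - F N x = l N x)
    (hG : ConvexOn ℝ (Set.Ioi 0) G) (hGL : ∀ x, 0 < x → G (x + 1) - G x = L x)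
    (hl : ∀ x, 0 < x → Tendsto (fun N => l N x) atTop (nhds (L x)))
    (A s : ℝ) (hA : 0 < A) (hs : 0 < s)
    (hL : Tendsto (fun m : ℕ => L (A + m + 1 + s) - L (A + m)) atTop (nhds 0)) :
    Tendsto (fun N => F N (A + s) - F N A) atTop (nhds (G (A + s) - G A)) := by
  rw [Metric.tendsto_atTop']
  rw [← Metric.tendsto_atTop', Metric.tendsto_nhds]
  intro ε hε
  have hL2 : Tendsto (fun m : ℕ => s * (L (A + m + 1 + s) - L (A + m))) atTop (nhds 0) := by
    simpa using hL.const_mul s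
  obtain ⟨m, hm⟩ := (hL2.eventually (gt_mem_nhds (show (0:ℝ) < ε / 2 by positivity))).exists
  have hG' := aux_sandwich G L hG hGL A s hA hs m
  have hsum : Tendsto (fun N => ∑ k ∈ Finset.range (m + 1), (l N (A + s + k) - l N (A + k))) atTop
      (nhds (∑ k ∈ Finset.range (m + 1), (L (A + s + k) - L (A + k)))) :=
    tendsto_finsetSum _ fun k _ => (hl _ (by positivity)).sub (hl _ (by positivity))
  have hlo := ((hl (A + m) (by positivity)).const_mul s).sub hsum
  have hhi := ((hl (A + m + 1 + s) (by positivity)).const_mul s).sub hsum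
  have hlo' := hlo.eventually (lt_mem_nhds (sub_lt_self _ (show (0:ℝ) < ε / 2 by positivity)))
  have hhi' := hhi.eventually (gt_mem_nhds (lt_add_of_pos_right _ (show (0:ℝ) < ε / 2 by positivity)))
  filter_upwards [hc, hF, hlo', hhi'] with N h1 h2 h3 h4
  have h5 := aux_sandwich (F N) (l N) h1 h2 A s hA hs m
  rw [Real.dist_eq, abs_lt]
  constructor <;> linarith [h5.1, h5.2, hG'.1, hG'.2]

lemma aux_convex_tsum (φ : ℕ → ℝ → ℝ) (hφ : ∀ k, ConvexOn ℝ (Set.Ioi 0) (φ k))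
    (hs : ∀ x, 0 < x → Summable fun k => φ k x) :
    ConvexOn ℝ (Set.Ioi 0) (fun x => ∑' k, φ k x) := by
  refine ⟨convex_Ioi 0, ?_⟩
  intro x hx y hy a b ha hb hab
  have hz := (convex_Ioi (0:ℝ)) hx hy ha hb hab
  simp only [smul_eq_mul] at *
  rw [← tsum_mul_left, ← tsum_mul_left,
    ← ((hs x hx).mul_left a).tsum_add ((hs y hy).mul_left b)]
  refine (hs _ hz).tsum_le_tsum (fun k => ?_) (((hs x hx).mul_left a).add ((hs y hy).mul_left b))
  simpa using (hφ k).2 hx hy ha hb hab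

lemma aux_summable_exp (h x : ℝ) (hh : 0 < h) :
    Summable fun k : ℕ => Real.exp (-h * (x + k)) := by
  have : Summable fun k : ℕ => Real.exp (-h * x) * Real.exp (k * -h) :=
    (Real.summable_exp_nat_mul_iff.2 (by linarith)).mul_left _
  refine this.congr fun k => ?_
  rw [← Real.exp_add]; ring_nf

lemma aux_summable_log (h x c : ℝ) (hh : 0 < h) :
    Summable fun k : ℕ => Real.log (1 + c * Real.exp (-h * (x + k))) :=
  Real.summable_log_one_add_of_summable ((aux_summable_exp h x hh).mul_left c)

lemma aux_tsum_shift (h x c : ℝ) (hh : 0 < h) :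
    ∑' k : ℕ, Real.log (1 + c * Real.exp (-h * (x + k))) =
     Real.log (1 + c * Real.exp (-h * x)) +
      ∑' k : ℕ, Real.log (1 + c * Real.exp (-h * (x + 1 + k))) := by
  rw [(aux_summable_log h x c hh).tsum_eq_zero_add]
  simp only [Nat.cast_zero, add_zero, Nat.cast_add, Nat.cast_one]
  congr 1
  refine tsum_congr fun k => ?_
  ring_nf

lemma aux_convex_plus (h c : ℝ) :
    ConvexOn ℝ (Set.Ioi 0) fun x => Real.log (1 + 1 * Real.exp (-h * (x + c))) := by
  have hd : ∀ x, HasDerivAt (fun x => Real.log (1 + 1 * Real.exp (-h * (x + c))))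
      (-h * Real.exp (-h * (x + c)) / (1 + 1 * Real.exp (-h * (x + c)))) x := by
    intro x
    have h1 : HasDerivAt (fun x => -h * (x + c)) (-h) x := by
      simpa using ((hasDerivAt_id x).add_const c).const_mul (-h)
    have h2 := ((h1.exp.const_mul 1).const_add 1).log (by positivity)
    convert h2 using 1
    ring
  refine ConvexOn.subset (t := Set.univ) ?_ (Set.subset_univ _) (convex_Ioi 0)
  refine Monotone.convexOn_univ_of_deriv (fun x => (hd x).differentiableAt) ?_
  intro x y hxy
  rw [(hd x).deriv, (hd y).deriv, div_le_div_iff₀ (by positivity) (by positivity)]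
  have : 0 ≤ h * (Real.exp (-h * (x + c)) - Real.exp (-h * (y + c))) := by
    rcases le_total 0 h with h0 | h0
    · exact mul_nonneg h0 (sub_nonneg.2 (Real.exp_le_exp.2 (by nlinarith)))
    · exact mul_nonneg_of_nonpos_of_nonpos h0 (sub_nonpos.2 (Real.exp_le_exp.2 (by nlinarith)))
  nlinarith

lemma aux_pos_minus (h x : ℝ) (hh : 0 < h) (hx : 0 < x) : 0 < 1 + -1 * Real.exp (-h * x) := by
  have : Real.exp (-h * x) < 1 := Real.exp_lt_one_iff.2 (by nlinarith)
  linarith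

lemma aux_convex_minus (h c : ℝ) (hh : 0 < h) (hc : 0 ≤ c) :
    ConvexOn ℝ (Set.Ioi 0) fun x => -Real.log (1 + -1 * Real.exp (-h * (x + c))) := by
  refine ⟨convex_Ioi 0, ?_⟩
  intro x hx y hy a b ha hb hab
  have hz := (convex_Ioi (0:ℝ)) hx hy ha hb hab
  simp only [smul_eq_mul, Set.mem_Ioi] at *
  have px := aux_pos_minus h (x + c) hh (by linarith)
  have py := aux_pos_minus h (y + c) hh (by linarith)
  have h1 := strictConcaveOn_log_Ioi.concaveOn.2 px py ha hb hab
  have h2 := convexOn_exp.2 (Set.mem_univ (-h * (x + c))) (Set.mem_univ (-h * (y + c))) ha hb hab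
  simp only [smul_eq_mul] at h1 h2
  have e : a * (-h * (x + c)) + b * (-h * (y + c)) = -h * (a * x + b * y + c) := by
    have : b = 1 - a := by linarith
    subst this; ring
  rw [e] at h2
  have hp : 0 < a * (1 + -1 * Real.exp (-h * (x + c))) + b * (1 + -1 * Real.exp (-h * (y + c))) := by
    exact (convex_Ioi (0:ℝ)) px py ha hb hab
  have h3 := Real.log_le_log hp (show _ ≤ 1 + -1 * Real.exp (-h * (a * x + b * y + c)) by nlinarith)
  linarith

lemma aux_poch (h x c : ℝ) (hh : 0 < h) (hp : ∀ k : ℕ, 0 < 1 + c * Real.exp (-h * (x + k))) :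
    qPochInf (-((c * Real.exp (-h * x) : ℝ) : ℂ)) (Real.exp (-h) : ℝ) =
      ((Real.exp (∑' k : ℕ, Real.log (1 + c * Real.exp (-h * (x + k)))) : ℝ) : ℂ) := by
  rw [Real.rexp_tsum_eq_tprod hp (aux_summable_log h x c hh), qPochInf]
  have hm := (Real.multipliable_of_summable_log hp (aux_summable_log h x c hh)).hasProd.map
    Complex.ofRealHom Complex.continuous_ofReal
  refine Eq.trans ?_ hm.tprod_eq
  refine tprod_congr fun k => ?_
  simp only [Function.comp, Complex.ofRealHom_eq_coe]
  rw [← Complex.ofReal_pow, ← Real.exp_nat_mul,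
    show -h * (x + k) = -h * x + k * -h by ring, Real.exp_add]
  push_cast
  ring

lemma aux_plus_limit (h : ℕ → ℝ) (hpos : ∀ᶠ N in atTop, 0 < h N) (h0 : Tendsto h atTop (nhds 0))
    (A s : ℝ) (hA : 0 < A) (hs : 0 < s) :
    Tendsto (fun N => (∑' k : ℕ, Real.log (1 + 1 * Real.exp (-h N * (A + s + k)))) -
      ∑' k : ℕ, Real.log (1 + 1 * Real.exp (-h N * (A + k)))) atTop
      (nhds (-s * Real.log 2)) := by
  have := aux_limit (fun N x => ∑' k : ℕ, Real.log (1 + 1 * Real.exp (-h N * (x + k))))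
    (fun N x => -Real.log (1 + 1 * Real.exp (-h N * x))) (fun x => -Real.log 2 * x)
    (fun x => -Real.log 2) ?_ ?_ ?_ ?_ ?_ A s hA hs (by simp)
  · convert this using 2
    ring
  · filter_upwards [hpos] with N hN
    exact aux_convex_tsum _ (fun k => aux_convex_plus (h N) k)
      (fun x _ => aux_summable_log (h N) x 1 hN)
  · filter_upwards [hpos] with N hN x hx
    have := aux_tsum_shift (h N) x 1 hN
    linarith
  · exact (LinearMap.mul ℝ ℝ (-Real.log 2)).convexOn (convex_Ioi 0)
  · intro x _; ring
  · intro x _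
    have h1 : Tendsto (fun N => 1 + 1 * Real.exp (-h N * x)) atTop (nhds (1 + 1 * Real.exp (-0 * x))) :=
      (((h0.neg.mul_const x).rexp).const_mul 1).const_add 1
    have h2 := (h1.log (by positivity)).neg
    convert h2 using 3
    norm_num

lemma aux_minus_limit (h : ℕ → ℝ) (hpos : ∀ᶠ N in atTop, 0 < h N) (h0 : Tendsto h atTop (nhds 0))
    (A s : ℝ) (hA : 0 < A) (hs : 0 < s) :
    Tendsto (fun N => (∑' k : ℕ, Real.log (1 + -1 * Real.exp (-h N * (A + k)))) -
      (∑' k : ℕ, Real.log (1 + -1 * Real.exp (-h N * (A + s + k)))) - s * Real.log (h N)) atTop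
      (nhds (Real.log (Real.Gamma (A + s)) - Real.log (Real.Gamma A))) := by
  have := aux_limit
    (fun N x => (∑' k : ℕ, -Real.log (1 + -1 * Real.exp (-h N * (x + k)))) + -Real.log (h N) * x)
    (fun N x => Real.log (1 + -1 * Real.exp (-h N * x)) - Real.log (h N))
    (fun x => Real.log (Real.Gamma x))
    (fun x => Real.log x) ?_ ?_ ?_ ?_ ?_ A s hA hs ?_
  · convert this using 2
    rw [tsum_neg, tsum_neg]
    ring
  · filter_upwards [hpos] with N hN
    refine (aux_convex_tsum _ (fun k => aux_convex_minus (h N) k hN (by positivity))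
      (fun x _ => (aux_summable_log (h N) x (-1) hN).neg)).add ?_
    exact (LinearMap.mul ℝ ℝ (-Real.log (h N))).convexOn (convex_Ioi 0)
  · filter_upwards [hpos] with N hN x hx
    have := aux_tsum_shift (h N) x (-1) hN
    simp only [tsum_neg] at *
    linarith
  · exact Real.convexOn_log_Gamma
  · intro x hx
    rw [Real.Gamma_add_one hx.ne', Real.log_mul hx.ne' (Real.Gamma_pos_of_pos hx).ne']
    ring
  · intro x hx
    have hd : HasDerivAt (fun y => -Real.exp (-y * x)) x 0 := by
      have h1 : HasDerivAt (fun y : ℝ => -y * x) (-1 * x) 0 := (hasDerivAt_neg 0).mul_const x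
      have h2 := h1.exp.neg
      rw [show -(Real.exp (-0 * x) * (-1 * x)) = x by simp] at h2
      exact h2
    have hs := hd.tendsto_slope_zero
    have ht : Tendsto h atTop (nhdsWithin 0 {0}ᶜ) :=
      tendsto_nhdsWithin_iff.2 ⟨h0, hpos.mono fun N hN => hN.ne'⟩
    have h2 := (hs.comp ht).log hx.ne'
    refine h2.congr' ?_
    filter_upwards [hpos] with N hN
    simp only [Function.comp, zero_add, smul_eq_mul]
    rw [Real.log_mul (by positivity), Real.log_inv]
    · simp; ring_nf
    · have := aux_pos_minus (h N) x hN hx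
      simp only [neg_zero, zero_mul, Real.exp_zero]
      linarith
  · have hA' : Tendsto (fun m : ℕ => A + (m : ℝ)) atTop atTop :=
      tendsto_atTop_add_const_left _ _ tendsto_natCast_atTop_atTop
    have h1 : Tendsto (fun m : ℕ => 1 + (1 + s) / (A + (m : ℝ))) atTop (nhds (1 + 0)) :=
      (hA'.const_div_atTop (1 + s)).const_add 1
    have h2 := h1.log (by norm_num)
    simp only [add_zero, Real.log_one] at h2
    refine h2.congr fun m => ?_
    have hm : 0 < A + (m : ℝ) := by positivity
    rw [← Real.log_div (by positivity) hm.ne']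
    congr 1
    field_simp
    ring

theorem statement1 (u v w r t : ℝ) (huv : 0 < u + v) (hw : 0 < w) (hr : 0 < r)
    (ht1 : -(2 * w) < t) (ht2 : t < 2 * r) (hv : v + t / 2 < 0) :
    Tendsto (fun N : ℕ =>
      Complex.ofReal ((N : ℝ) ^ (u + v)) *
      (qPochInf (qpow N (-2 * v - t)) (qN N) * qPochInf (-(qpow N (w + u))) (qN N) *
       qPochInf (qpow N (w + r)) (qN N) * qPochInf (-(qpow N (r + u - t))) (qN N)) /
      (qPochInf (-(qpow N (w - v))) (qN N) * qPochInf (qpow N (u - v - t)) (qN N) *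
       qPochInf (-(qpow N (r - v - t))) (qN N) * qPochInf (qpow N (u + v + w + r)) (qN N)))
      atTop
      (nhds (Complex.Gamma ((u + v + w + r : ℝ) : ℂ) * Complex.Gamma ((u - v - t : ℝ) : ℂ) /
        (Complex.Gamma ((-2 * v - t : ℝ) : ℂ) * Complex.Gamma ((w + r : ℝ) : ℂ)))) := by
  set h : ℕ → ℝ := fun N : ℕ => 2 / Real.sqrt N with hh
  have hpos : ∀ᶠ N in atTop, 0 < h N := by
    filter_upwards [eventually_gt_atTop 0] with N hN
    have : (0:ℝ) < N := by exact_mod_cast hN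
    simp only [hh]; positivity
  have h0 : Tendsto h atTop (nhds 0) :=
    (Real.tendsto_sqrt_atTop.comp tendsto_natCast_atTop_atTop).const_div_atTop 2
  have m1 := aux_minus_limit h hpos h0 (-2 * v - t) (u + v) (by linarith) huv
  have m2 := aux_minus_limit h hpos h0 (w + r) (u + v) (by linarith) huv
  have p1 := aux_plus_limit h hpos h0 (w - v) (u + v) (by linarith) huv
  have p2 := aux_plus_limit h hpos h0 (r - v - t) (u + v) (by linarith) huv
  rw [show -2 * v - t + (u + v) = u - v - t by ring] at m1
  rw [show w + r + (u + v) = u + v + w + r by ring] at m2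
  rw [show w - v + (u + v) = w + u by ring] at p1
  rw [show r - v - t + (u + v) = r + u - t by ring] at p2
  have tot := (((m1.add m2).add (p1.add p2)).add_const (2 * (u + v) * Real.log 2)).rexp
  have tot2 := (Complex.continuous_ofReal.tendsto _).comp tot
  have g1 : 0 < Real.Gamma (u - v - t) := Real.Gamma_pos_of_pos (by linarith)
  have g2 : 0 < Real.Gamma (u + v + w + r) := Real.Gamma_pos_of_pos (by linarith)
  have g3 : 0 < Real.Gamma (-2 * v - t) := Real.Gamma_pos_of_pos (by linarith)
  have g4 : 0 < Real.Gamma (w + r) := Real.Gamma_pos_of_pos (by linarith)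
  have hval : Real.exp (Real.log (Real.Gamma (u - v - t)) - Real.log (Real.Gamma (-2 * v - t)) +
      (Real.log (Real.Gamma (u + v + w + r)) - Real.log (Real.Gamma (w + r))) +
      (-(u + v) * Real.log 2 + -(u + v) * Real.log 2) + 2 * (u + v) * Real.log 2) =
      Real.Gamma (u + v + w + r) * Real.Gamma (u - v - t) /
        (Real.Gamma (-2 * v - t) * Real.Gamma (w + r)) := by
    rw [show Real.log (Real.Gamma (u - v - t)) - Real.log (Real.Gamma (-2 * v - t)) +
      (Real.log (Real.Gamma (u + v + w + r)) - Real.log (Real.Gamma (w + r))) +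
      (-(u + v) * Real.log 2 + -(u + v) * Real.log 2) + 2 * (u + v) * Real.log 2 =
      (Real.log (Real.Gamma (u + v + w + r)) + Real.log (Real.Gamma (u - v - t))) -
      (Real.log (Real.Gamma (-2 * v - t)) + Real.log (Real.Gamma (w + r))) by ring]
    rw [Real.exp_sub, Real.exp_add, Real.exp_add, Real.exp_log g1, Real.exp_log g2,
      Real.exp_log g3, Real.exp_log g4]
  rw [hval] at tot2
  simp only [Complex.Gamma_ofReal]
  rw [← Complex.ofReal_mul, ← Complex.ofReal_mul, ← Complex.ofReal_div]
  refine tot2.congr' ?_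
  filter_upwards [hpos, eventually_gt_atTop 0] with N hN hN0
  have hNr : (0:ℝ) < N := by exact_mod_cast hN0
  have eq : ((qN N : ℝ) : ℂ) = ((Real.exp (-h N) : ℝ) : ℂ) := by
    simp only [qN, hh]; congr 2; ring
  have ep : ∀ x, qpow N x = ((Real.exp (-h N * x) : ℝ) : ℂ) := by
    intro x; simp only [qpow, hh]; congr 2; ring
  have em : ∀ x, 0 < x → qPochInf (qpow N x) (qN N) =
      ((Real.exp (∑' k : ℕ, Real.log (1 + -1 * Real.exp (-h N * (x + k)))) : ℝ) : ℂ) := by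
    intro x hx
    rw [← aux_poch (h N) x (-1) hN (fun k => aux_pos_minus _ _ hN (by positivity)), eq, ep]
    congr 1; push_cast; ring
  have epl : ∀ x, qPochInf (-(qpow N x)) (qN N) =
      ((Real.exp (∑' k : ℕ, Real.log (1 + 1 * Real.exp (-h N * (x + k)))) : ℝ) : ℂ) := by
    intro x
    rw [← aux_poch (h N) x 1 hN (fun k => by positivity), eq, ep]
    congr 1; push_cast; ring
  rw [em _ (by linarith), em _ (by linarith), em _ (by linarith), em _ (by linarith),
    epl, epl, epl, epl, Real.rpow_def_of_pos hNr]
  have hlog : Real.log (h N) = Real.log 2 - Real.log N / 2 := by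
    simp only [hh]
    rw [Real.log_div (by norm_num) (by positivity), Real.log_sqrt hNr.le]
  simp only [Function.comp, ← Complex.ofReal_mul, ← Complex.ofReal_div, ← Real.exp_add,
    ← Real.exp_sub]
  rw [hlog]
  congr 2
  ring
end

section
/- Fix real numbers v, w, s, t, ρ with w > 0, s < t, v + s/2 < 0 and ρ > 0. For each positive integer N with 4N > ρ, let q = q_N = exp(−2/√N) and θ = arccos(1 − ρ/(2N)). Then the limit as N → ∞ of [ (q^{−2v−s};q)_∞ (q^{t−s};q)_∞ · ∏_{σ∈{+1,−1}} (−q^{w+t/2} e^{σiθ};q)_∞ ] / [ (−q^{w−v};q)_∞ (−q^{v+w+t};q)_∞ · ∏_{σ∈{+1,−1}} (q^{t/2−v−s} e^{σiθ};q)_∞ ] exists and equals |Γ(t/2 − s − v + i√ρ/2)|² / ( Γ(−2v−s) Γ(t−s) ). -/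
open Filter

theorem qratio (q : ℂ) (hq : ‖q‖ < 1) (A B z z' : ℂ)
    (hz : ∀ k : ℕ, 1 - z * q ^ k ≠ 0) (hz' : ∀ k : ℕ, 1 - z' * q ^ k ≠ 0) :
    qPochInf A q * qPochInf B q / (qPochInf z q * qPochInf z' q) =
      ∏' k : ℕ, ((1 - A * q ^ k) * (1 - B * q ^ k) / ((1 - z * q ^ k) * (1 - z' * q ^ k))) := by
  have hs : ∀ A : ℂ, Summable fun k : ℕ => ‖-(A * q ^ k)‖ := by
    intro A
    simp only [norm_neg, norm_mul, norm_pow]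
    exact (summable_geometric_of_lt_one (norm_nonneg _) hq).mul_left _
  have hm : ∀ A : ℂ, Multipliable fun k : ℕ => 1 - A * q ^ k := by
    intro A
    simpa [sub_eq_add_neg] using multipliable_one_add_of_summable (hs A)
  have hn : ∀ A : ℂ, (∀ k : ℕ, 1 - A * q ^ k ≠ 0) → ∏' k : ℕ, (1 - A * q ^ k) ≠ 0 := by
    intro A hA
    simpa [sub_eq_add_neg] using
      tprod_one_add_ne_zero_of_summable (f := fun k : ℕ => -(A * q ^ k))
        (by simpa [sub_eq_add_neg] using hA) (hs A)
  unfold qPochInf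
  rw [← (hm A).tprod_mul (hm B), ← (hm z).tprod_mul (hm z'), Multipliable.tprod_div₀]
  · exact (hm A).mul (hm B)
  · exact (hm z).mul (hm z')
  · rw [(hm z).tprod_mul (hm z')]
    exact mul_ne_zero (hn z hz) (hn z' hz')

theorem pos_id (x y : ℂ) : (1 - Complex.exp (-x + y)) * (1 - Complex.exp (-x - y)) =
    2 * Complex.exp (-x) * (Complex.cosh x - Complex.cosh y) := by
  simp only [Complex.cosh, sub_eq_add_neg, Complex.exp_add, Complex.exp_neg]
  have := Complex.exp_ne_zero x
  have := Complex.exp_ne_zero y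
  field_simp
  ring

theorem neg_id (x y : ℂ) : (1 + Complex.exp (-x + y)) * (1 + Complex.exp (-x - y)) =
    2 * Complex.exp (-x) * (Complex.cosh x + Complex.cosh y) := by
  simp only [Complex.cosh, sub_eq_add_neg, Complex.exp_add, Complex.exp_neg]
  have := Complex.exp_ne_zero x
  have := Complex.exp_ne_zero y
  field_simp
  ring

theorem lim_cosh (e : ℝ) : Tendsto (fun h : ℝ => (Real.cosh (h * e) - 1) / h ^ 2)
    (nhdsWithin 0 (Set.Ioi 0)) (nhds (e ^ 2 / 2)) := by
  have h1 : HasDerivAt (fun h : ℝ => Real.sinh (h * (e / 2))) (e / 2) 0 := by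
    have := ((hasDerivAt_id (0 : ℝ)).mul_const (e / 2)).sinh
    simpa using this
  have h2 := h1.tendsto_slope.mono_left
    (nhdsWithin_mono 0 (fun x (hx : x ∈ Set.Ioi (0 : ℝ)) => (ne_of_gt hx : x ≠ 0)))
  have h3 := (h2.pow 2).const_mul 2
  have e1 : 2 * (e / 2) ^ 2 = e ^ 2 / 2 := by ring
  rw [e1] at h3
  refine h3.congr' ?_
  filter_upwards [self_mem_nhdsWithin] with h hh
  have hh' : h ≠ 0 := ne_of_gt hh
  have : Real.cosh (h * e) = 1 + 2 * Real.sinh (h * (e / 2)) ^ 2 := by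
    rw [show h * e = 2 * (h * (e / 2)) by ring, Real.cosh_two_mul, Real.cosh_sq]; ring
  rw [this]
  simp [slope_def_field]
  field_simp

theorem quad_le_cosh (x : ℝ) : 1 + x ^ 2 / 2 ≤ Real.cosh x := by
  have : Real.cosh x = 1 + 2 * Real.sinh (x / 2) ^ 2 := by
    conv_lhs => rw [show x = 2 * (x / 2) by ring, Real.cosh_two_mul, Real.cosh_sq]
    ring
  rw [this]
  have h : |x / 2| ≤ |Real.sinh (x / 2)| := by
    rw [Real.abs_sinh]
    exact Real.self_le_sinh_iff.2 (abs_nonneg _)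
  have := sq_le_sq.2 h
  nlinarith

theorem summ (c : ℝ) (C : ℝ) : Summable fun k : ℕ => C / (c + k) ^ 2 := by
  have := (Real.summable_one_div_nat_add_rpow c 2).2 (by norm_num)
  refine (this.mul_left C).congr fun k => ?_
  simp [div_eq_mul_inv, add_comm]

noncomputable def f1 (ρ c d h : ℝ) (k : ℕ) : ℝ :=
  (1 - ρ * h ^ 2 / 8 - Real.cosh (h * d)) / (Real.cosh (h * (c + k)) - (1 - ρ * h ^ 2 / 8))

noncomputable def f2 (ρ g d h : ℝ) (k : ℕ) : ℝ :=
  (1 - ρ * h ^ 2 / 8 - Real.cosh (h * d)) / (Real.cosh (h * (g + k)) + Real.cosh (h * d))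

noncomputable def g1 (ρ c d : ℝ) (k : ℕ) : ℝ :=
  (-ρ / 8 - d ^ 2 / 2) / ((c + k) ^ 2 / 2 + ρ / 8)

theorem num_bound (ρ d : ℝ) (hρ : 0 < ρ) : ∀ᶠ h in nhdsWithin (0 : ℝ) (Set.Ioi 0),
    |1 - ρ * h ^ 2 / 8 - Real.cosh (h * d)| ≤ (ρ / 8 + d ^ 2 / 2 + 1) * h ^ 2 := by
  have := (lim_cosh d).eventually_lt_const (show d ^ 2 / 2 < d ^ 2 / 2 + 1 by linarith)
  filter_upwards [this, self_mem_nhdsWithin] with h h1 h2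
  have h2' : (0 : ℝ) < h := h2
  have h3 : 0 < h ^ 2 := by positivity
  rw [div_lt_iff₀ h3] at h1
  have := Real.one_le_cosh (h * d)
  have : 0 < ρ * h ^ 2 := by positivity
  rw [abs_le]
  constructor <;> nlinarith

theorem tend1 (ρ c d : ℝ) (hρ : 0 < ρ) (hc : 0 < c) :
    Tendsto (fun h => ∏' k, (1 + (f1 ρ c d h k : ℂ))) (nhdsWithin (0 : ℝ) (Set.Ioi 0))
      (nhds (∏' k, (1 + (g1 ρ c d k : ℂ)))) := by
  refine tendsto_tprod_one_add_of_dominated_convergence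
    (summ c (2 * (ρ / 8 + d ^ 2 / 2 + 1))) ?_ ?_
  · intro k
    refine (Complex.continuous_ofReal.tendsto _).comp ?_
    have n1 := (lim_cosh d).const_sub (-ρ / 8)
    have n2 := (lim_cosh (c + k)).add_const (ρ / 8)
    refine (n1.div n2 (by positivity)).congr' ?_
    filter_upwards [self_mem_nhdsWithin] with h hh
    have hh' : h ≠ 0 := ne_of_gt hh
    simp only [f1, Pi.div_apply]
    rw [← mul_div_mul_right _ _ (pow_ne_zero 2 hh')]
    congr 1
    · field_simp; ring
    · field_simp; ring
  · filter_upwards [num_bound ρ d hρ, self_mem_nhdsWithin] with h h1 h2 k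
    have h2' : (0 : ℝ) < h := h2
    have hck : 0 < c + k := by positivity
    have q := quad_le_cosh (h * (c + k))
    have : 0 < ρ * h ^ 2 := by positivity
    have hp : 0 < h ^ 2 * (c + k) ^ 2 / 2 := by positivity
    have hd : h ^ 2 * (c + k) ^ 2 / 2 ≤ Real.cosh (h * (c + k)) - (1 - ρ * h ^ 2 / 8) := by
      nlinarith
    rw [Complex.norm_real, Real.norm_eq_abs, f1, abs_div, abs_of_pos (hp.trans_le hd)]
    calc _ ≤ (ρ / 8 + d ^ 2 / 2 + 1) * h ^ 2 / (h ^ 2 * (c + k) ^ 2 / 2) := by gcongr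
      _ = _ := by field_simp

theorem summ2 (g C : ℝ) : Summable fun k : ℕ => C / (1 + (g + k) ^ 2) := by
  have h1 := (summ g 1).mul_left |C|
  have hb : Summable fun k : ℕ => |C| * (1 / (g + k) ^ 2) := h1
  refine Summable.of_norm_bounded_eventually hb ?_
  have : ∀ᶠ k : ℕ in atTop, 0 < g + (k : ℝ) :=
    (tendsto_atTop_add_const_left _ g tendsto_natCast_atTop_atTop).eventually_gt_atTop 0
  rw [Nat.cofinite_eq_atTop]
  filter_upwards [this] with k hk
  rw [Real.norm_eq_abs, abs_div, abs_of_pos (show 0 < 1 + (g + (k : ℝ)) ^ 2 by positivity),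
    mul_one_div]
  gcongr
  linarith

theorem tend2 (ρ g d : ℝ) (hρ : 0 < ρ) :
    Tendsto (fun h => ∏' k, (1 + (f2 ρ g d h k : ℂ))) (nhdsWithin (0 : ℝ) (Set.Ioi 0))
      (nhds 1) := by
  have key : Tendsto (fun h => ∏' k, (1 + (f2 ρ g d h k : ℂ))) (nhdsWithin (0 : ℝ) (Set.Ioi 0))
      (nhds (∏' k : ℕ, (1 + (0 : ℂ)))) := by
    refine tendsto_tprod_one_add_of_dominated_convergence
      (summ2 g (2 * (ρ / 8 + d ^ 2 / 2 + 1))) ?_ ?_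
    · intro k
      rw [← Complex.ofReal_zero]
      refine (Complex.continuous_ofReal.tendsto _).comp ?_
      have : ContinuousAt (fun h => f2 ρ g d h k) 0 := by
        unfold f2
        refine ContinuousAt.div ?_ ?_ (by simp)
        · exact Continuous.continuousAt (by fun_prop)
        · exact Continuous.continuousAt (by fun_prop)
      have h0 := this.tendsto.mono_left (nhdsWithin_le_nhds (s := Set.Ioi 0))
      simpa [f2] using h0
    · filter_upwards [num_bound ρ d hρ, self_mem_nhdsWithin,
        nhdsWithin_le_nhds (Iio_mem_nhds (show (0 : ℝ) < 1 by norm_num))] with h h1 h2 h3 k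
      have h2' : (0 : ℝ) < h := h2
      have h3' : h < 1 := h3
      have q := quad_le_cosh (h * (g + k))
      have q2 := Real.one_le_cosh (h * d)
      have hp : 0 < h ^ 2 * (1 + (g + k) ^ 2) / 2 := by positivity
      have hd : h ^ 2 * (1 + (g + k) ^ 2) / 2 ≤ Real.cosh (h * (g + k)) + Real.cosh (h * d) := by
        nlinarith
      rw [Complex.norm_real, Real.norm_eq_abs, f2, abs_div, abs_of_pos (hp.trans_le hd)]
      calc _ ≤ (ρ / 8 + d ^ 2 / 2 + 1) * h ^ 2 / (h ^ 2 * (1 + (g + k) ^ 2) / 2) := by gcongr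
        _ = _ := by field_simp
  simpa using key

theorem gam (ρ c d : ℝ) (hρ : 0 < ρ) (hc : 0 < c) (h1 : 0 < c - d) (h2 : 0 < c + d) :
    ∏' k, (1 + (g1 ρ c d k : ℂ)) = GammaSq c (Real.sqrt ρ / 2) /
      (Complex.Gamma ((c - d : ℝ) : ℂ) * Complex.Gamma ((c + d : ℝ) : ℂ)) := by
  have hs : Summable fun k => ‖(g1 ρ c d k : ℂ)‖ := by
    refine (summ c (2 * (ρ / 8 + d ^ 2 / 2))).of_nonneg_of_le (fun _ => norm_nonneg _) fun k => ?_
    have hck : 0 < c + k := by positivity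
    rw [Complex.norm_real, Real.norm_eq_abs, g1, abs_div,
      abs_of_pos (show 0 < (c + (k : ℝ)) ^ 2 / 2 + ρ / 8 by positivity),
      abs_of_neg (show -ρ / 8 - d ^ 2 / 2 < 0 by nlinarith [sq_nonneg d])]
    calc _ ≤ -(-ρ / 8 - d ^ 2 / 2) / ((c + (k : ℝ)) ^ 2 / 2) := by
          gcongr
          · nlinarith [sq_nonneg d]
          · linarith
      _ = _ := by field_simp; ring
  have ht := (multipliable_one_add_of_summable hs).hasProd.tendsto_prod_nat
  have ht' := (tendsto_add_atTop_iff_nat 1).2 ht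
  refine tendsto_nhds_unique ht' ?_
  have G := Complex.GammaSeq_tendsto_Gamma
  unfold GammaSq
  set y := Real.sqrt ρ / 2 with hy
  have hy2 : y ^ 2 = ρ / 4 := by rw [hy, div_pow, Real.sq_sqrt hρ.le]; norm_num
  have hG := ((G ((c : ℂ) + y * Complex.I)).mul (G ((c : ℂ) - y * Complex.I))).div
    ((G ((c - d : ℝ) : ℂ)).mul (G ((c + d : ℝ) : ℂ)))
    (mul_ne_zero (Complex.Gamma_ne_zero_of_re_pos (by simpa using h1))
      (Complex.Gamma_ne_zero_of_re_pos (by simpa using h2)))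
  refine hG.congr' ?_
  filter_upwards [eventually_ne_atTop 0] with n hn
  have hn' : (n : ℂ) ≠ 0 := by exact_mod_cast hn
  have hfac : ((n.factorial : ℕ) : ℂ) ≠ 0 := by exact_mod_cast n.factorial_ne_zero
  have nz : ∀ z : ℂ, 0 < z.re → ∀ k : ℕ, z + k ≠ 0 := by
    intro z hz k h0
    have := congrArg Complex.re h0
    simp at this
    have hk : (0 : ℝ) ≤ k := by positivity
    linarith
  have nzp : ∀ z : ℂ, 0 < z.re → ∏ k ∈ Finset.range (n + 1), (z + k) ≠ 0 :=
    fun z hz => Finset.prod_ne_zero_iff.2 fun k _ => nz z hz k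
  have e1 : ∀ k : ℕ, 1 + (g1 ρ c d k : ℂ) = (((c - d : ℝ) : ℂ) + k) * (((c + d : ℝ) : ℂ) + k) /
      (((c : ℂ) + y * Complex.I + k) * ((c : ℂ) - y * Complex.I + k)) := by
    intro k
    have m1 := nz ((c : ℂ) + y * Complex.I) (by simpa using hc) k
    have m2 := nz ((c : ℂ) - y * Complex.I) (by simpa using hc) k
    have hck : 0 < c + k := by positivity
    have m3 : ((c : ℂ) + k) ^ 2 / 2 + ρ / 8 ≠ 0 := by
      have : (c + (k : ℝ)) ^ 2 / 2 + ρ / 8 ≠ 0 := by positivity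
      exact_mod_cast this
    have e2 : ((c : ℂ) + y * Complex.I + k) * ((c : ℂ) - y * Complex.I + k) =
        2 * (((c : ℂ) + k) ^ 2 / 2 + ρ / 8) := by
      have hyc : (y : ℂ) ^ 2 = ρ / 4 := by exact_mod_cast hy2
      linear_combination (-(y : ℂ) ^ 2) * Complex.I_sq + hyc
    rw [e2, g1]
    push_cast
    rw [eq_div_iff (by simpa using m3), one_add_div m3, div_mul_eq_mul_div, div_eq_iff m3]
    ring
  simp_rw [e1, Finset.prod_div_distrib, Finset.prod_mul_distrib]
  have p1 := nzp ((c : ℂ) + y * Complex.I) (by simpa using hc)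
  have p2 := nzp ((c : ℂ) - y * Complex.I) (by simpa using hc)
  have p3 := nzp ((c - d : ℝ) : ℂ) (by simpa using h1)
  have p4 := nzp ((c + d : ℝ) : ℂ) (by simpa using h2)
  have pw : (n : ℂ) ^ ((c : ℂ) + y * Complex.I) * (n : ℂ) ^ ((c : ℂ) - y * Complex.I) =
      (n : ℂ) ^ ((c - d : ℝ) : ℂ) * (n : ℂ) ^ ((c + d : ℝ) : ℂ) := by
    rw [← Complex.cpow_add _ _ hn', ← Complex.cpow_add _ _ hn']
    congr 1
    push_cast
    ring
  simp only [Pi.div_apply, Complex.GammaSeq]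
  have z1 : (n : ℂ) ^ ((c - d : ℝ) : ℂ) ≠ 0 := by simp [Complex.cpow_eq_zero_iff, hn']
  have z2 : (n : ℂ) ^ ((c + d : ℝ) : ℂ) ≠ 0 := by simp [Complex.cpow_eq_zero_iff, hn']
  generalize (n : ℂ) ^ ((c - d : ℝ) : ℂ) = X1 at *
  generalize (n : ℂ) ^ ((c + d : ℝ) : ℂ) = X2 at *
  generalize (n : ℂ) ^ ((c : ℂ) + y * Complex.I) = X3 at *
  generalize (n : ℂ) ^ ((c : ℂ) - y * Complex.I) = X4 at *
  generalize ∏ k ∈ Finset.range (n + 1), ((c : ℂ) + y * Complex.I + k) = P1 at *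
  generalize ∏ k ∈ Finset.range (n + 1), ((c : ℂ) - y * Complex.I + k) = P2 at *
  generalize ∏ k ∈ Finset.range (n + 1), (((c - d : ℝ) : ℂ) + k) = P3 at *
  generalize ∏ k ∈ Finset.range (n + 1), (((c + d : ℝ) : ℂ) + k) = P4 at *
  field_simp
  linear_combination pw

theorem ratio1 (ρ c d h θ : ℝ) (hρ : 0 < ρ) (hh : 0 < h) (hc : 0 < c)
    (hθ : Real.cos θ = 1 - ρ * h ^ 2 / 8) :
    qPochInf (Real.exp (-h * (c - d)) : ℝ) (Real.exp (-h) : ℝ) *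
      qPochInf (Real.exp (-h * (c + d)) : ℝ) (Real.exp (-h) : ℝ) /
    (qPochInf ((Real.exp (-h * c) : ℝ) * eI θ) (Real.exp (-h) : ℝ) *
      qPochInf ((Real.exp (-h * c) : ℝ) * eI (-θ)) (Real.exp (-h) : ℝ)) =
    ∏' k, (1 + (f1 ρ c d h k : ℂ)) := by
  have hx : ∀ k : ℕ, Complex.cosh ((h * (c + k) : ℝ) : ℂ) - Complex.cosh (Complex.I * θ) ≠ 0 := by
    intro k
    have q := quad_le_cosh (h * (c + k))
    have hck : 0 < c + k := by positivity
    have : 0 < (h * (c + k)) ^ 2 / 2 := by positivity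
    have := Real.cos_le_one θ
    rw [mul_comm Complex.I, Complex.cosh_mul_I]
    have h0 : Real.cosh (h * (c + k)) - Real.cos θ ≠ 0 := by linarith
    exact_mod_cast h0
  have t1 : ∀ k : ℕ, ((Real.exp (-h * c) : ℝ) : ℂ) * eI θ * ((Real.exp (-h) : ℝ) : ℂ) ^ k =
      Complex.exp (-((h * (c + k) : ℝ) : ℂ) + Complex.I * θ) := by
    intro k
    simp only [eI, Complex.ofReal_exp, ← Complex.exp_nat_mul, ← Complex.exp_add]
    congr 1; push_cast; ring
  have t2 : ∀ k : ℕ, ((Real.exp (-h * c) : ℝ) : ℂ) * eI (-θ) * ((Real.exp (-h) : ℝ) : ℂ) ^ k =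
      Complex.exp (-((h * (c + k) : ℝ) : ℂ) - Complex.I * θ) := by
    intro k
    simp only [eI, Complex.ofReal_exp, ← Complex.exp_nat_mul, ← Complex.exp_add]
    congr 1; push_cast; ring
  have t3 : ∀ k : ℕ, ((Real.exp (-h * (c - d)) : ℝ) : ℂ) * ((Real.exp (-h) : ℝ) : ℂ) ^ k =
      Complex.exp (-((h * (c + k) : ℝ) : ℂ) + ((h * d : ℝ) : ℂ)) := by
    intro k
    simp only [Complex.ofReal_exp, ← Complex.exp_nat_mul, ← Complex.exp_add]
    congr 1; push_cast; ring
  have t4 : ∀ k : ℕ, ((Real.exp (-h * (c + d)) : ℝ) : ℂ) * ((Real.exp (-h) : ℝ) : ℂ) ^ k =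
      Complex.exp (-((h * (c + k) : ℝ) : ℂ) - ((h * d : ℝ) : ℂ)) := by
    intro k
    simp only [Complex.ofReal_exp, ← Complex.exp_nat_mul, ← Complex.exp_add]
    congr 1; push_cast; ring
  have hne : ∀ k : ℕ, (1 - Complex.exp (-((h * (c + k) : ℝ) : ℂ) + Complex.I * θ)) *
      (1 - Complex.exp (-((h * (c + k) : ℝ) : ℂ) - Complex.I * θ)) ≠ 0 := by
    intro k
    rw [pos_id]
    exact mul_ne_zero (mul_ne_zero two_ne_zero (Complex.exp_ne_zero _)) (hx k)
  rw [qratio]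
  · refine tprod_congr fun k => ?_
    rw [t1, t2, t3, t4, pos_id, pos_id,
      mul_div_mul_left _ _ (mul_ne_zero two_ne_zero (Complex.exp_ne_zero _))]
    have hxk := hx k
    rw [mul_comm Complex.I, Complex.cosh_mul_I, ← Complex.ofReal_cos, hθ] at hxk ⊢
    rw [f1, ← Complex.ofReal_cosh, ← Complex.ofReal_cosh]
    rw [← Complex.ofReal_cosh] at hxk
    push_cast at hxk ⊢
    rw [one_add_div hxk]
    congr 1
    ring
  · rw [Complex.norm_real, Real.norm_eq_abs, Real.abs_exp, Real.exp_lt_one_iff]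
    linarith
  · intro k; rw [t1]; exact left_ne_zero_of_mul (hne k)
  · intro k; rw [t2]; exact right_ne_zero_of_mul (hne k)

theorem ratio2 (ρ g d h θ : ℝ) (hh : 0 < h)
    (hθ : Real.cos θ = 1 - ρ * h ^ 2 / 8) :
    qPochInf (-(Real.exp (-h * g) : ℝ) * eI θ) (Real.exp (-h) : ℝ) *
      qPochInf (-(Real.exp (-h * g) : ℝ) * eI (-θ)) (Real.exp (-h) : ℝ) /
    (qPochInf (-(Real.exp (-h * (g - d)) : ℝ)) (Real.exp (-h) : ℝ) *
      qPochInf (-(Real.exp (-h * (g + d)) : ℝ)) (Real.exp (-h) : ℝ)) =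
    ∏' k, (1 + (f2 ρ g d h k : ℂ)) := by
  have hx : ∀ k : ℕ, Complex.cosh ((h * (g + k) : ℝ) : ℂ) + Complex.cosh ((h * d : ℝ) : ℂ) ≠ 0 := by
    intro k
    have h0 : Real.cosh (h * (g + k)) + Real.cosh (h * d) ≠ 0 :=
      (add_pos (Real.cosh_pos _) (Real.cosh_pos _)).ne'
    exact_mod_cast h0
  have t1 : ∀ k : ℕ, 1 - -((Real.exp (-h * g) : ℝ) : ℂ) * eI θ * ((Real.exp (-h) : ℝ) : ℂ) ^ k =
      1 + Complex.exp (-((h * (g + k) : ℝ) : ℂ) + Complex.I * θ) := by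
    intro k
    rw [neg_mul, neg_mul, sub_neg_eq_add]
    simp only [eI, Complex.ofReal_exp, ← Complex.exp_nat_mul, ← Complex.exp_add]
    congr 2; push_cast; ring
  have t2 : ∀ k : ℕ, 1 - -((Real.exp (-h * g) : ℝ) : ℂ) * eI (-θ) * ((Real.exp (-h) : ℝ) : ℂ) ^ k =
      1 + Complex.exp (-((h * (g + k) : ℝ) : ℂ) - Complex.I * θ) := by
    intro k
    rw [neg_mul, neg_mul, sub_neg_eq_add]
    simp only [eI, Complex.ofReal_exp, ← Complex.exp_nat_mul, ← Complex.exp_add]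
    congr 2; push_cast; ring
  have t3 : ∀ k : ℕ, 1 - -((Real.exp (-h * (g - d)) : ℝ) : ℂ) * ((Real.exp (-h) : ℝ) : ℂ) ^ k =
      1 + Complex.exp (-((h * (g + k) : ℝ) : ℂ) + ((h * d : ℝ) : ℂ)) := by
    intro k
    rw [neg_mul, sub_neg_eq_add]
    simp only [Complex.ofReal_exp, ← Complex.exp_nat_mul, ← Complex.exp_add]
    congr 2; push_cast; ring
  have t4 : ∀ k : ℕ, 1 - -((Real.exp (-h * (g + d)) : ℝ) : ℂ) * ((Real.exp (-h) : ℝ) : ℂ) ^ k =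
      1 + Complex.exp (-((h * (g + k) : ℝ) : ℂ) - ((h * d : ℝ) : ℂ)) := by
    intro k
    rw [neg_mul, sub_neg_eq_add]
    simp only [Complex.ofReal_exp, ← Complex.exp_nat_mul, ← Complex.exp_add]
    congr 2; push_cast; ring
  have hne : ∀ k : ℕ, (1 + Complex.exp (-((h * (g + k) : ℝ) : ℂ) + ((h * d : ℝ) : ℂ))) *
      (1 + Complex.exp (-((h * (g + k) : ℝ) : ℂ) - ((h * d : ℝ) : ℂ))) ≠ 0 := by
    intro k
    rw [neg_id]
    exact mul_ne_zero (mul_ne_zero two_ne_zero (Complex.exp_ne_zero _)) (hx k)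
  rw [qratio]
  · refine tprod_congr fun k => ?_
    rw [t1, t2, t3, t4, neg_id, neg_id,
      mul_div_mul_left _ _ (mul_ne_zero two_ne_zero (Complex.exp_ne_zero _))]
    have hxk := hx k
    rw [mul_comm Complex.I, Complex.cosh_mul_I, ← Complex.ofReal_cos, hθ]
    rw [f2, ← Complex.ofReal_cosh, ← Complex.ofReal_cosh]
    rw [← Complex.ofReal_cosh, ← Complex.ofReal_cosh] at hxk
    push_cast at hxk ⊢
    rw [one_add_div hxk]
    congr 1
    ring
  · rw [Complex.norm_real, Real.norm_eq_abs, Real.abs_exp, Real.exp_lt_one_iff]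
    linarith
  · intro k; rw [t3]; exact left_ne_zero_of_mul (hne k)
  · intro k; rw [t4]; exact right_ne_zero_of_mul (hne k)

theorem statement4 (v w s t ρ : ℝ) (hw : 0 < w) (hst : s < t) (hv : v + s / 2 < 0)
    (hρ : 0 < ρ) :
    Tendsto (fun N : ℕ =>
      (qPochInf (qpow N (-2 * v - s)) (qN N) * qPochInf (qpow N (t - s)) (qN N) *
       (qPochInf (-(qpow N (w + t / 2)) * eI (Real.arccos (1 - ρ / (2 * (N : ℝ))))) (qN N) *
        qPochInf (-(qpow N (w + t / 2)) * eI (-(Real.arccos (1 - ρ / (2 * (N : ℝ)))))) (qN N))) /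
      (qPochInf (-(qpow N (w - v))) (qN N) * qPochInf (-(qpow N (v + w + t))) (qN N) *
       (qPochInf (qpow N (t / 2 - v - s) * eI (Real.arccos (1 - ρ / (2 * (N : ℝ))))) (qN N) *
        qPochInf (qpow N (t / 2 - v - s) * eI (-(Real.arccos (1 - ρ / (2 * (N : ℝ)))))) (qN N))))
      atTop
      (nhds (GammaSq (t / 2 - s - v) (Real.sqrt ρ / 2) /
        (Complex.Gamma ((-2 * v - s : ℝ) : ℂ) * Complex.Gamma ((t - s : ℝ) : ℂ)))) := by
  have hc : 0 < t / 2 - v - s := by linarith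
  have h1 : 0 < (t / 2 - v - s) - (v + t / 2) := by linarith
  have h2 : 0 < (t / 2 - v - s) + (v + t / 2) := by linarith
  have T := (tend1 ρ (t / 2 - v - s) (v + t / 2) hρ hc).mul (tend2 ρ (w + t / 2) (v + t / 2) hρ)
  rw [gam ρ _ _ hρ hc h1 h2, mul_one] at T
  have hlim : Tendsto (fun N : ℕ => 2 / Real.sqrt N) atTop (nhdsWithin 0 (Set.Ioi 0)) := by
    refine tendsto_nhdsWithin_iff.2 ⟨?_, ?_⟩
    · exact tendsto_const_nhds.div_atTop
        (Real.tendsto_sqrt_atTop.comp tendsto_natCast_atTop_atTop)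
    · filter_upwards [eventually_gt_atTop 0] with N hN
      have : (0 : ℝ) < N := by exact_mod_cast hN
      exact div_pos two_pos (Real.sqrt_pos.2 this)
  have T' := T.comp hlim
  rw [show t / 2 - v - s - (v + t / 2) = -2 * v - s by ring,
    show t / 2 - v - s + (v + t / 2) = t - s by ring,
    show t / 2 - v - s = t / 2 - s - v by ring] at T'
  refine T'.congr' ?_
  have hbig : ∀ᶠ N : ℕ in atTop, ρ < (N : ℝ) :=
    tendsto_natCast_atTop_atTop.eventually_gt_atTop ρ
  filter_upwards [hbig] with N hN
  have hNpos : (0 : ℝ) < N := hρ.trans hN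
  have hsq := Real.sqrt_pos.2 hNpos
  have hh : 0 < 2 / Real.sqrt N := div_pos two_pos hsq
  have hh2 : (2 / Real.sqrt N) ^ 2 = 4 / N := by
    rw [div_pow, Real.sq_sqrt hNpos.le]; norm_num
  have hcos : Real.cos (Real.arccos (1 - ρ / (2 * (N : ℝ)))) =
      1 - ρ * (2 / Real.sqrt N) ^ 2 / 8 := by
    rw [Real.cos_arccos, hh2]
    · field_simp; ring
    · have : ρ / (2 * (N : ℝ)) ≤ 1 := by rw [div_le_one (by positivity)]; linarith
      linarith
    · have : 0 ≤ ρ / (2 * (N : ℝ)) := by positivity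
      linarith
  have r1 := ratio1 ρ (t / 2 - s - v) (v + t / 2) _ _ hρ hh (by linarith) hcos
  have r2 := ratio2 ρ (w + t / 2) (v + t / 2) _ _ hh hcos
  simp only [Function.comp_apply]
  rw [← r1, ← r2, div_mul_div_comm]
  have eq : ∀ x : ℝ, qpow N x = ((Real.exp (-(2 / Real.sqrt N) * x) : ℝ) : ℂ) := by
    intro x; unfold qpow; congr 2; ring
  have eq' : qN N = Real.exp (-(2 / Real.sqrt N)) := by
    unfold qN; congr 1; ring
  simp only [eq, eq']
  rw [show t / 2 - s - v - (v + t / 2) = -2 * v - s by ring,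
    show t / 2 - s - v + (v + t / 2) = t - s by ring,
    show w + t / 2 - (v + t / 2) = w - v by ring,
    show w + t / 2 + (v + t / 2) = v + w + t by ring,
    show t / 2 - s - v = t / 2 - v - s by ring]
  congr 1
  ring
end

section
/- Fix real numbers v, w, s, t with s < t and v + s/2 < 0, and let j be a natural number with j < −2v − s. With q = q_N = exp(−2/√N), the limit as N → ∞ of [ (q^{−2v−s};q)_∞ (−q^{w+t+j+v};q)_∞ (−q^{w−j−v};q)_∞ (q^{t−s};q)_∞ ] / [ (−q^{w−v};q)_∞ (q^{t−s+j};q)_∞ (q^{−2v−s−j};q)_∞ (−q^{v+w+t};q)_∞ ] exists and equals Γ(t−s+j) Γ(−2v−s−j) / ( Γ(−2v−s) Γ(t−s) ). -/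
open Filter

lemma qN_pow_aux (N : ℕ) (x : ℝ) (k : ℕ) : qpow N x * ((qN N : ℝ) : ℂ) ^ k = qpow N (x + k) := by
  unfold qpow qN
  rw [← Complex.ofReal_pow, ← Complex.ofReal_mul, ← Real.exp_nat_mul, ← Real.exp_add]
  congr 2
  ring

lemma qN_norm_lt {N : ℕ} (hN : 1 ≤ N) : ‖((qN N : ℝ) : ℂ)‖ < 1 := by
  have h : 0 < Real.sqrt N := Real.sqrt_pos.2 (by exact_mod_cast hN)
  unfold qN
  rw [Complex.norm_real, Real.norm_eq_abs, abs_of_pos (Real.exp_pos _), Real.exp_lt_one_iff]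
  exact div_neg_of_neg_of_pos (by norm_num) h

lemma summ_aux (a q : ℂ) (hq : ‖q‖ < 1) : Summable (fun k : ℕ => ‖-(a * q ^ k)‖) := by
  simp only [norm_neg, norm_mul, norm_pow]
  exact (summable_geometric_of_lt_one (norm_nonneg _) hq).mul_left _

lemma qPochInf_split (a q : ℂ) (hq : ‖q‖ < 1) (j : ℕ) :
    qPochInf a q = (∏ i ∈ Finset.range j, (1 - a * q ^ i)) * qPochInf (a * q ^ j) q := by
  have h := multipliable_one_add_of_summable (summ_aux (a * q ^ j) q hq)
  have e : ∀ n : ℕ, 1 - a * q ^ (n + j) = 1 + -(a * q ^ j * q ^ n) := fun n => by ring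
  have e' : ∀ n : ℕ, 1 - a * q ^ j * q ^ n = 1 + -(a * q ^ j * q ^ n) := fun n => by ring
  have h2 : Multipliable (fun n : ℕ => 1 - a * q ^ (n + j)) := by
    simp only [e]
    exact h
  have h3 := Multipliable.prod_mul_tprod_nat_mul' (f := fun k : ℕ => 1 - a * q ^ k) h2
  unfold qPochInf
  rw [← h3]
  simp only [e, e']

lemma split_pos {N : ℕ} (hN : 1 ≤ N) (x : ℝ) (j : ℕ) :
    qPochInf (qpow N x) (qN N) =
      (∏ i ∈ Finset.range j, (1 - qpow N (x + i))) * qPochInf (qpow N (x + j)) (qN N) := by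
  rw [qPochInf_split _ _ (qN_norm_lt hN) j]
  simp only [qN_pow_aux]

lemma split_neg {N : ℕ} (hN : 1 ≤ N) (x : ℝ) (j : ℕ) :
    qPochInf (-(qpow N x)) (qN N) =
      (∏ i ∈ Finset.range j, (1 + qpow N (x + i))) * qPochInf (-(qpow N (x + j))) (qN N) := by
  rw [qPochInf_split _ _ (qN_norm_lt hN) j]
  simp only [neg_mul, qN_pow_aux, sub_neg_eq_add]

lemma one_add_qpow_ne (N : ℕ) (x : ℝ) : 1 + qpow N x ≠ 0 := by
  unfold qpow
  have := Real.exp_pos (-2 * x / Real.sqrt N)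
  exact_mod_cast (by positivity : (1 : ℝ) + Real.exp (-2 * x / Real.sqrt N) ≠ 0)

lemma one_sub_qpow_ne {N : ℕ} (hN : 1 ≤ N) {x : ℝ} (hx : 0 < x) : 1 - qpow N x ≠ 0 := by
  have h : 0 < Real.sqrt N := Real.sqrt_pos.2 (by exact_mod_cast hN)
  unfold qpow
  have h1 : Real.exp (-2 * x / Real.sqrt N) < 1 := by
    rw [Real.exp_lt_one_iff]
    exact div_neg_of_neg_of_pos (by linarith) h
  exact_mod_cast (sub_pos.2 h1).ne'

lemma ne_pos {N : ℕ} (hN : 1 ≤ N) {x : ℝ} (hx : 0 < x) : qPochInf (qpow N x) (qN N) ≠ 0 := by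
  unfold qPochInf
  simp only [sub_eq_add_neg]
  refine tprod_one_add_ne_zero_of_summable (fun i => ?_) (summ_aux _ _ (qN_norm_lt hN))
  rw [qN_pow_aux, ← sub_eq_add_neg]
  exact one_sub_qpow_ne hN (by positivity)

lemma ne_neg {N : ℕ} (hN : 1 ≤ N) (x : ℝ) : qPochInf (-(qpow N x)) (qN N) ≠ 0 := by
  unfold qPochInf
  simp only [sub_eq_add_neg]
  refine tprod_one_add_ne_zero_of_summable (fun i => ?_) (summ_aux _ _ (qN_norm_lt hN))
  rw [neg_mul, qN_pow_aux, neg_neg]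
  exact one_add_qpow_ne N _

lemma tendsto_inv_sqrt : Tendsto (fun N : ℕ => (Real.sqrt N)⁻¹) atTop (nhds 0) :=
  tendsto_inv_atTop_zero.comp (Real.tendsto_sqrt_atTop.comp tendsto_natCast_atTop_atTop)

lemma tendsto_qpow (x : ℝ) : Tendsto (fun N : ℕ => qpow N x) atTop (nhds 1) := by
  unfold qpow
  have h := (tendsto_inv_sqrt.const_mul (-2 * x)).rexp
  rw [mul_zero, Real.exp_zero] at h
  have h2 := (Complex.continuous_ofReal.tendsto 1).comp h
  simpa [div_eq_mul_inv, Function.comp_def] using h2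

lemma tendsto_scaled (x : ℝ) :
    Tendsto (fun N : ℕ => (1 - qpow N x) * ((Real.sqrt N / 2 : ℝ) : ℂ)) atTop (nhds (x : ℂ)) := by
  have hd : HasDerivAt (fun y : ℝ => Real.exp (-2 * x * y)) (-2 * x) 0 := by
    have := ((hasDerivAt_id (0 : ℝ)).const_mul (-2 * x)).exp
    simpa using this
  have h0 : Tendsto (fun N : ℕ => (Real.sqrt N)⁻¹) atTop (nhdsWithin 0 {0}ᶜ) := by
    refine tendsto_nhdsWithin_iff.2 ⟨tendsto_inv_sqrt, ?_⟩
    filter_upwards [eventually_ge_atTop 1] with N hN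
    have h : 0 < Real.sqrt N := Real.sqrt_pos.2 (by exact_mod_cast hN)
    simpa using h.ne'
  have h1 := (hd.tendsto_slope_zero.comp h0).mul_const (-1 / 2 : ℝ)
  have h2 := (Complex.continuous_ofReal.tendsto _).comp h1
  have e : -2 * x * (-1 / 2 : ℝ) = x := by ring
  rw [e] at h2
  refine h2.congr fun N => ?_
  simp only [Function.comp_def, qpow, zero_add, inv_inv, smul_eq_mul, mul_zero, Real.exp_zero]
  rw [← div_eq_mul_inv]
  push_cast
  ring

lemma gamma_prod (x : ℝ) (hx : 0 < x) (j : ℕ) :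
    Complex.Gamma ((x + j : ℝ) : ℂ) =
      (∏ i ∈ Finset.range j, ((x + i : ℝ) : ℂ)) * Complex.Gamma (x : ℂ) := by
  induction j with
  | zero => simp
  | succ j ih =>
    have hne : ((x + j : ℝ) : ℂ) ≠ 0 := by
      have : x + j ≠ 0 := by positivity
      exact_mod_cast this
    have := Complex.Gamma_add_one _ hne
    rw [Finset.prod_range_succ, mul_right_comm, ← ih, mul_comm, ← this]
    congr 1
    push_cast
    ring

theorem statement6 (v w s t : ℝ) (j : ℕ) (hst : s < t) (hv : v + s / 2 < 0)
    (hj : (j : ℝ) < -2 * v - s) :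
    Tendsto (fun N : ℕ =>
      (qPochInf (qpow N (-2 * v - s)) (qN N) * qPochInf (-(qpow N (w + t + j + v))) (qN N) *
       qPochInf (-(qpow N (w - j - v))) (qN N) * qPochInf (qpow N (t - s)) (qN N)) /
      (qPochInf (-(qpow N (w - v))) (qN N) * qPochInf (qpow N (t - s + j)) (qN N) *
       qPochInf (qpow N (-2 * v - s - j)) (qN N) * qPochInf (-(qpow N (v + w + t))) (qN N)))
      atTop
      (nhds (Complex.Gamma ((t - s + j : ℝ) : ℂ) * Complex.Gamma ((-2 * v - s - j : ℝ) : ℂ) /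
        (Complex.Gamma ((-2 * v - s : ℝ) : ℂ) * Complex.Gamma ((t - s : ℝ) : ℂ)))) := by
  obtain ⟨b, hb⟩ : ∃ b : ℝ, b = -2 * v - s - j := ⟨_, rfl⟩
  have hb0 : 0 < b := by linarith
  have hc0 : 0 < t - s := by linarith
  have e1 : -2 * v - s = b + j := by linarith
  have e2 : w + t + j + v = (v + w + t) + j := by ring
  obtain ⟨d, hd⟩ : ∃ d : ℝ, d = w - j - v := ⟨_, rfl⟩
  have e3 : w - v = d + j := by linarith
  rw [← hb, e1, e2, ← hd, e3]
  generalize t - s = c at *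
  generalize v + w + t = u at *
  rw [gamma_prod b hb0, gamma_prod c hc0]
  have gb : Complex.Gamma (b : ℂ) ≠ 0 := Complex.Gamma_ne_zero_of_re_pos (by simpa using hb0)
  have gc : Complex.Gamma (c : ℂ) ≠ 0 := Complex.Gamma_ne_zero_of_re_pos (by simpa using hc0)
  have pb : (∏ i ∈ Finset.range j, ((b + i : ℝ) : ℂ)) ≠ 0 := by
    refine Finset.prod_ne_zero_iff.2 fun i _ => ?_
    have : b + i ≠ 0 := by positivity
    exact_mod_cast this
  have T : ∀ x : ℝ, Tendsto (fun N : ℕ => ∏ i ∈ Finset.range j,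
      ((1 - qpow N (x + i)) * ((Real.sqrt N / 2 : ℝ) : ℂ))) atTop
      (nhds (∏ i ∈ Finset.range j, ((x + i : ℝ) : ℂ))) := fun x =>
    tendsto_finsetProd _ fun i _ => tendsto_scaled _
  have S : ∀ x : ℝ, Tendsto (fun N : ℕ => ∏ i ∈ Finset.range j,
      (1 + qpow N (x + i))) atTop
      (nhds (∏ i ∈ Finset.range j, ((1 : ℂ) + 1))) := fun x =>
    tendsto_finsetProd _ fun i _ => (tendsto_qpow _).const_add 1
  have two : (∏ i ∈ Finset.range j, ((1 : ℂ) + 1)) ≠ 0 :=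
    Finset.prod_ne_zero_iff.2 fun i _ => by norm_num
  have L := ((T c).div (T b) pb).mul ((S d).div (S u) two)
  rw [div_self two, mul_one] at L
  have e : (∏ i ∈ Finset.range j, ((c + i : ℝ) : ℂ)) * Complex.Gamma (c : ℂ) *
      Complex.Gamma (b : ℂ) / ((∏ i ∈ Finset.range j, ((b + i : ℝ) : ℂ)) *
      Complex.Gamma (b : ℂ) * Complex.Gamma (c : ℂ)) =
      (∏ i ∈ Finset.range j, ((c + i : ℝ) : ℂ)) / (∏ i ∈ Finset.range j, ((b + i : ℝ) : ℂ)) := by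
    field_simp
  rw [e]
  refine L.congr' ?_
  filter_upwards [eventually_ge_atTop 1] with N hN
  rw [split_pos hN c j, split_pos hN b j, split_neg hN d j, split_neg hN u j]
  have hr : ((Real.sqrt N / 2 : ℝ) : ℂ) ≠ 0 := by
    have h : 0 < Real.sqrt N := Real.sqrt_pos.2 (by exact_mod_cast hN)
    have h2 : Real.sqrt N / 2 ≠ 0 := by positivity
    exact_mod_cast h2
  have n1 := ne_pos hN (x := c + j) (by positivity)
  have n2 := ne_pos hN (x := b + j) (by positivity)
  have n3 := ne_neg hN (d + j)
  have n4 := ne_neg hN (u + j)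
  have m1 : ∏ i ∈ Finset.range j, (1 - qpow N (b + i)) ≠ 0 :=
    Finset.prod_ne_zero_iff.2 fun i _ => one_sub_qpow_ne hN (by positivity)
  have m2 : ∏ i ∈ Finset.range j, (1 + qpow N (u + i)) ≠ 0 :=
    Finset.prod_ne_zero_iff.2 fun i _ => one_add_qpow_ne N _
  simp only [Pi.div_apply, Finset.prod_mul_distrib, Finset.prod_const, Finset.card_range]
  have hrj := pow_ne_zero j hr
  generalize ((Real.sqrt N / 2 : ℝ) : ℂ) ^ j = r at *
  generalize ∏ i ∈ Finset.range j, (1 - qpow N (b + i)) = A at *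
  generalize ∏ i ∈ Finset.range j, (1 + qpow N (u + i)) = B at *
  generalize ∏ i ∈ Finset.range j, (1 - qpow N (c + i)) = C at *
  generalize ∏ i ∈ Finset.range j, (1 + qpow N (d + i)) = D at *
  field_simp
end

section
/- Fix real numbers u, v, w, r, t with u+v+w+r not a nonpositive integer, and let N be a positive integer with q = q_N = exp(−2/√N). For y ∈ (0, 4N) set θ_y = arccos(1 − y/(2N)) and define f_{v,w,u,r}(y) := [ (q;q)_∞ (−q^{v+w+t};q)_∞ (q^{u+v};q)_∞ (−q^{v+r};q)_∞ (−q^{u+w};q)_∞ (q^{w+r};q)_∞ (−q^{u+r−t};q)_∞ · (e^{2iθ_y};q)_∞ (e^{−2iθ_y};q)_∞ ] / [ 4πN (q^{u+v+w+r};q)_∞ √(y/N) √(1 − y/(4N)) · ∏_{σ∈{+1,−1}} (q^{v+t/2} e^{σiθ_y};q)_∞ (−q^{w+t/2} e^{σiθ_y};q)_∞ (q^{u−t/2} e^{σiθ_y};q)_∞ (−q^{r−t/2} e^{σiθ_y};q)_∞ ]. Then for every y ∈ (0, 4N) one has the symmetry f_{v,w,u,r}(y) = f_{w,v,r,u}(4N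 − y), where f_{w,v,r,u} is obtained from f_{v,w,u,r} by simultaneously exchanging v ↔ w and u ↔ r. -/
open Filter

/-- The continuous density `f_{v,w,u,r}(y)` of the rescaled (tangent) Askey–Wilson marginal
law at time `q^t` with parameters `(q^v, −q^w, q^u, −q^r, q_N)`. -/
noncomputable def awTangentDensity (N : ℕ) (t v w u r y : ℝ) : ℂ :=
  (qPochInf (Complex.ofReal (qN N)) (qN N) * qPochInf (-(qpow N (v + w + t))) (qN N) *
   qPochInf (qpow N (u + v)) (qN N) * qPochInf (-(qpow N (v + r))) (qN N) *
   qPochInf (-(qpow N (u + w))) (qN N) * qPochInf (qpow N (w + r)) (qN N) *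
   qPochInf (-(qpow N (u + r - t))) (qN N) *
   qPochInf (eI (2 * Real.arccos (1 - y / (2 * (N : ℝ))))) (qN N) *
   qPochInf (eI (-2 * Real.arccos (1 - y / (2 * (N : ℝ))))) (qN N)) /
  (Complex.ofReal (4 * Real.pi * (N : ℝ)) * qPochInf (qpow N (u + v + w + r)) (qN N) *
   Complex.ofReal (Real.sqrt (y / (N : ℝ))) * Complex.ofReal (Real.sqrt (1 - y / (4 * (N : ℝ)))) *
   ((qPochInf (qpow N (v + t / 2) * eI (Real.arccos (1 - y / (2 * (N : ℝ))))) (qN N) *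
     qPochInf (-(qpow N (w + t / 2)) * eI (Real.arccos (1 - y / (2 * (N : ℝ))))) (qN N) *
     qPochInf (qpow N (u - t / 2) * eI (Real.arccos (1 - y / (2 * (N : ℝ))))) (qN N) *
     qPochInf (-(qpow N (r - t / 2)) * eI (Real.arccos (1 - y / (2 * (N : ℝ))))) (qN N)) *
    (qPochInf (qpow N (v + t / 2) * eI (-(Real.arccos (1 - y / (2 * (N : ℝ)))))) (qN N) *
     qPochInf (-(qpow N (w + t / 2)) * eI (-(Real.arccos (1 - y / (2 * (N : ℝ)))))) (qN N) *
     qPochInf (qpow N (u - t / 2) * eI (-(Real.arccos (1 - y / (2 * (N : ℝ)))))) (qN N) *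
     qPochInf (-(qpow N (r - t / 2)) * eI (-(Real.arccos (1 - y / (2 * (N : ℝ)))))) (qN N))))

theorem statement7 (u v w r t : ℝ) (h : ∀ n : ℕ, u + v + w + r ≠ -(n : ℝ))
    (N : ℕ) (hN : 0 < N) (y : ℝ) (hy0 : 0 < y) (hy4 : y < 4 * (N : ℝ)) :
    awTangentDensity N t v w u r y = awTangentDensity N t w v r u (4 * (N : ℝ) - y) := by
  have hNR : (0 : ℝ) < N := by exact_mod_cast hN
  have hth : Real.arccos (1 - (4 * (N : ℝ) - y) / (2 * (N : ℝ)))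
      = Real.pi - Real.arccos (1 - y / (2 * (N : ℝ))) := by
    rw [← Real.arccos_neg]
    congr 1
    field_simp
    ring
  have hs1 : Real.sqrt ((4 * (N : ℝ) - y) / (N : ℝ)) = 2 * Real.sqrt (1 - y / (4 * (N : ℝ))) := by
    have e : (4 * (N : ℝ) - y) / (N : ℝ) = 2 ^ 2 * (1 - y / (4 * (N : ℝ))) := by
      field_simp
      ring
    rw [e, Real.sqrt_mul (by norm_num), Real.sqrt_sq (by norm_num)]
  have hs2 : Real.sqrt (y / (N : ℝ)) = 2 * Real.sqrt (1 - (4 * (N : ℝ) - y) / (4 * (N : ℝ))) := by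
    have e : y / (N : ℝ) = 2 ^ 2 * (1 - (4 * (N : ℝ) - y) / (4 * (N : ℝ))) := by
      field_simp
      ring
    rw [e, Real.sqrt_mul (by norm_num), Real.sqrt_sq (by norm_num)]
  unfold awTangentDensity
  rw [hth, hs1, hs2]
  generalize Real.arccos (1 - y / (2 * (N : ℝ))) = θ
  have e1 : eI (Real.pi - θ) = - eI (-θ) := by
    unfold eI
    rw [show Complex.I * ((Real.pi - θ : ℝ) : ℂ)
      = Complex.I * ((-θ : ℝ) : ℂ) + Real.pi * Complex.I by push_cast; ring,
      Complex.exp_add, Complex.exp_pi_mul_I]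
    ring
  have e2 : eI (-(Real.pi - θ)) = - eI θ := by
    unfold eI
    rw [show Complex.I * ((-(Real.pi - θ) : ℝ) : ℂ)
      = Complex.I * (θ : ℂ) - Real.pi * Complex.I by push_cast; ring,
      Complex.exp_sub, Complex.exp_pi_mul_I]
    ring
  have e3 : eI (2 * (Real.pi - θ)) = eI (-2 * θ) := by
    unfold eI
    rw [show Complex.I * ((2 * (Real.pi - θ) : ℝ) : ℂ)
      = Complex.I * ((-2 * θ : ℝ) : ℂ) + 2 * Real.pi * Complex.I by push_cast; ring,
      Complex.exp_add, Complex.exp_two_pi_mul_I, mul_one]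
  have e4 : eI (-2 * (Real.pi - θ)) = eI (2 * θ) := by
    unfold eI
    rw [show Complex.I * ((-2 * (Real.pi - θ) : ℝ) : ℂ)
      = Complex.I * ((2 * θ : ℝ) : ℂ) - 2 * Real.pi * Complex.I by push_cast; ring,
      Complex.exp_sub, Complex.exp_two_pi_mul_I, div_one]
  rw [e1, e2, e3, e4, show w + v + t = v + w + t by ring, show r + w = w + r by ring,
    show w + u = u + w by ring, show r + v = v + r by ring, show v + u = u + v by ring,
    show r + u - t = u + r - t by ring, show w + r + v + u = u + v + w + r by ring]
  simp only [neg_mul, mul_neg, neg_neg, Complex.ofReal_mul, Complex.ofReal_ofNat]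
  congr 1 <;> ring
end
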